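/- Let n ≥ 2 and N₀ > 0. Then there exist constants C > 0 and α > 0, depending only on n and N₀, with the following property: for every pair of harmonic functions u, v on the unit ball B₁ ⊂ ℝⁿ with u(0) = 0, N(0,u,r) ≤ N₀ for every r ∈ (0,1), ∫_{B_{1/2}} u² dx = 1, and Z(u) ⊆ Z(v), and for every r ∈ (0, 7/8), one has sup_{B_{r/2} ∖ Z(u)} |v/u| ≤ C·(r^{−α} ∫_{B_r} v² dx)^{1/2}. -/

import Mathlib

open MeasureTheory Metric Filter

/-- The Laplacian of `u : ℝⁿ → ℝ` at `x`, as the sum of second partial derivatives. -/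
noncomputable def lapl {n : ℕ} (u : EuclideanSpace ℝ (Fin n) → ℝ)
    (x : EuclideanSpace ℝ (Fin n)) : ℝ :=
  ∑ i, fderiv ℝ (fun y => fderiv ℝ u y (EuclideanSpace.single i 1)) x (EuclideanSpace.single i 1)

/-- `u` is harmonic on all of ℝⁿ: it is C² and its Laplacian vanishes identically. -/
def HarmonicFn {n : ℕ} (u : EuclideanSpace ℝ (Fin n) → ℝ) : Prop :=
  ContDiff ℝ 2 u ∧ ∀ x, lapl u x = 0

/-- `u` is harmonic on the (open) set `Ω`: it is C² on `Ω` and its Laplacian vanishes on `Ω`. -/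
def HarmonicFnOn {n : ℕ} (u : EuclideanSpace ℝ (Fin n) → ℝ)
    (Ω : Set (EuclideanSpace ℝ (Fin n))) : Prop :=
  ContDiffOn ℝ 2 u Ω ∧ ∀ x ∈ Ω, lapl u x = 0

/-- The Dirichlet integral `D(x₀,u,r) = ∫_{B_r(x₀)} |∇u|² dx`. -/
noncomputable def DInt {n : ℕ} (u : EuclideanSpace ℝ (Fin n) → ℝ)
    (x₀ : EuclideanSpace ℝ (Fin n)) (r : ℝ) : ℝ :=
  ∫ x in Metric.ball x₀ r, ‖gradient u x‖ ^ 2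

/-- The height `H(x₀,u,r) = ∫_{∂B_r(x₀)} u² dσ`, with respect to the
`(n-1)`-dimensional Hausdorff measure on the sphere. -/
noncomputable def HInt {n : ℕ} (u : EuclideanSpace ℝ (Fin n) → ℝ)
    (x₀ : EuclideanSpace ℝ (Fin n)) (r : ℝ) : ℝ :=
  ∫ x in Metric.sphere x₀ r, (u x) ^ 2 ∂ μH[(n : ℝ) - 1]

/-- The Almgren frequency `N(x₀,u,r) = r · D(x₀,u,r) / H(x₀,u,r)`. -/
noncomputable def freqN {n : ℕ} (u : EuclideanSpace ℝ (Fin n) → ℝ)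
    (x₀ : EuclideanSpace ℝ (Fin n)) (r : ℝ) : ℝ :=
  r * DInt u x₀ r / HInt u x₀ r

section parta
abbrev Eu (n : ℕ) := EuclideanSpace ℝ (Fin n)

lemma hasDerivAt_maxpow (k : ℕ) (t : ℝ) :
    HasDerivAt (fun t : ℝ => max t 0 ^ (k+2)) (((k+2 : ℕ):ℝ) * max t 0 ^ (k+1)) t := by
  have hL : ∀ t : ℝ, t ≤ 0 → HasDerivWithinAt (fun t : ℝ => max t 0 ^ (k+2))
      (((k+2 : ℕ):ℝ) * max t 0 ^ (k+1)) (Set.Iic 0) t := by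
    intro t ht
    have : HasDerivWithinAt (fun _ : ℝ => (0:ℝ)) 0 (Set.Iic 0) t := hasDerivWithinAt_const _ _ _
    rw [max_eq_right ht]
    simp only [ne_eq, Nat.add_eq_zero_iff, one_ne_zero, and_false, not_false_eq_true, zero_pow,
      mul_zero]
    refine this.congr (fun y hy => ?_) ?_
    · rw [max_eq_right hy]; simp
    · rw [max_eq_right ht]; simp
  have hR : ∀ t : ℝ, 0 ≤ t → HasDerivWithinAt (fun t : ℝ => max t 0 ^ (k+2))
      (((k+2 : ℕ):ℝ) * max t 0 ^ (k+1)) (Set.Ici 0) t := by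
    intro t ht
    have := (hasDerivAt_pow (k+2) t).hasDerivWithinAt (s := Set.Ici 0)
    rw [max_eq_left ht]
    refine (this.congr (fun y hy => ?_) ?_)
    · rw [max_eq_left hy]
    · rw [max_eq_left ht]
  rcases lt_trichotomy t 0 with h | h | h
  · exact (hL t h.le).hasDerivAt (Iic_mem_nhds h)
  · have := (hL t h.le).union (hR t h.ge)
    rw [Set.Iic_union_Ici] at this
    exact hasDerivWithinAt_univ.1 this
  · exact (hR t h.le).hasDerivAt (Ici_mem_nhds h)

lemma contDiff_maxpow2 : ContDiff ℝ 1 (fun t : ℝ => max t 0 ^ 2) := by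
  rw [contDiff_one_iff_deriv]
  refine ⟨fun t => (hasDerivAt_maxpow 0 t).differentiableAt, ?_⟩
  have : deriv (fun t : ℝ => max t 0 ^ 2) = fun t => ((2:ℕ):ℝ) * max t 0 ^ 1 := by
    ext t; exact (hasDerivAt_maxpow 0 t).deriv
  rw [this]; fun_prop

lemma contDiff_maxpow3 : ContDiff ℝ 2 (fun t : ℝ => max t 0 ^ 3) := by
  have h2 : ((2 : WithTop ℕ∞)) = 1 + 1 := by norm_num
  rw [h2, contDiff_succ_iff_deriv]
  refine ⟨fun t => (hasDerivAt_maxpow 1 t).differentiableAt, by simp, ?_⟩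
  have : deriv (fun t : ℝ => max t 0 ^ 3) = fun t => ((3:ℕ):ℝ) * max t 0 ^ 2 := by
    ext t; exact (hasDerivAt_maxpow 1 t).deriv
  rw [this]; exact contDiff_const.mul contDiff_maxpow2

noncomputable def kP {n : ℕ} (y : Eu n) : ℝ := max (1 - ‖y‖^2) 0 ^ 3
noncomputable def kR {n : ℕ} (y : Eu n) : ℝ := 6 * max (1 - ‖y‖^2) 0 ^ 2

variable {n : ℕ}

lemma kP_nonneg (y : Eu n) : 0 ≤ kP y := by unfold kP; positivity
lemma kR_nonneg (y : Eu n) : 0 ≤ kR y := by unfold kR; positivity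
lemma kR_le (y : Eu n) : kR y ≤ 6 := by
  unfold kR
  have : max (1 - ‖y‖^2) 0 ≤ 1 := max_le (by nlinarith [sq_nonneg ‖y‖]) zero_le_one
  have := pow_le_one₀ (n := 2) (le_max_right (1 - ‖y‖^2) 0) this
  linarith
lemma kP_zero {y : Eu n} (h : 1 ≤ ‖y‖) : kP y = 0 := by
  unfold kP; rw [max_eq_right (by nlinarith)]; simp
lemma kR_zero {y : Eu n} (h : 1 ≤ ‖y‖) : kR y = 0 := by
  unfold kR; rw [max_eq_right (by nlinarith)]; simp
lemma kR_ge {y : Eu n} (h : ‖y‖ ≤ 3/4) : 1 ≤ kR y := by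
  unfold kR
  have h1 : (7/16:ℝ) ≤ max (1 - ‖y‖^2) 0 := le_max_of_le_left (by nlinarith [norm_nonneg y])
  nlinarith
lemma contDiff_kP : ContDiff ℝ 2 (kP (n := n)) := by
  unfold kP
  exact contDiff_maxpow3.comp (contDiff_const.sub (contDiff_norm_sq ℝ))
lemma contDiff_kR : ContDiff ℝ 1 (kR (n := n)) := by
  unfold kR
  exact contDiff_const.mul (contDiff_maxpow2.comp (contDiff_const.sub (contDiff_norm_sq ℝ)))
lemma continuous_kR : Continuous (kR (n := n)) := contDiff_kR.continuous
lemma continuous_kP : Continuous (kP (n := n)) := contDiff_kP.continuous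
lemma fderiv_kP (y z : Eu n) : fderiv ℝ kP y z = - (kR y * inner ℝ y z) := by
  have h1 : HasFDerivAt (fun y : Eu n => 1 - ‖y‖^2) (0 - 2 • (innerSL ℝ y)) y := by
    exact (hasFDerivAt_const (1:ℝ) y).sub (hasStrictFDerivAt_norm_sq y).hasFDerivAt
  have h2 := (hasDerivAt_maxpow 1 (1 - ‖y‖^2)).comp_hasFDerivAt y h1
  have h3 : HasFDerivAt kP _ y := h2
  rw [h3.fderiv]
  simp [kR]
  ring

lemma hcs_kP : HasCompactSupport (kP (n := n)) := by
  refine HasCompactSupport.intro (isCompact_closedBall 0 1) (fun x hx => kP_zero ?_)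
  simp at hx; exact hx.le
lemma hcs_kR : HasCompactSupport (kR (n := n)) := by
  refine HasCompactSupport.intro (isCompact_closedBall 0 1) (fun x hx => kR_zero ?_)
  simp at hx; exact hx.le

lemma integral_fderiv_zero (W : Eu n → ℝ) (hW : ContDiff ℝ 1 W) (hc : HasCompactSupport W)
    (e : Eu n) : ∫ y, fderiv ℝ W y e = 0 := by
  have hcont : Continuous (fun y => fderiv ℝ W y e) :=
    (hW.continuous_fderiv one_ne_zero).clm_apply continuous_const
  have hcs : HasCompactSupport (fun y => fderiv ℝ W y e) := hc.fderiv_apply (𝕜 := ℝ) e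
  have := integral_mul_fderiv_eq_neg_fderiv_mul_of_integrable (μ := volume) (f := W)
    (g := fun _ : Eu n => (1:ℝ)) (v := e) (by simpa using hcont.integrable_of_hasCompactSupport hcs)
    (by simp) (by simpa using hW.continuous.integrable_of_hasCompactSupport hc)
    (fun x _ => (hW.differentiable one_ne_zero x)) (fun x _ => by simp)
  simp at this
  linarith

noncomputable def pd (i : Fin n) (f : Eu n → ℝ) (x : Eu n) : ℝ :=
  fderiv ℝ f x (EuclideanSpace.single i 1)

lemma lapl_eq (f : Eu n → ℝ) (x : Eu n) : lapl f x = ∑ i, pd i (pd i f) x := rfl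

lemma contDiff_pd {f : Eu n → ℝ} (hf : ContDiff ℝ 2 f) (i : Fin n) : ContDiff ℝ 1 (pd i f) := by
  unfold pd
  exact (hf.fderiv_right (m := 1) (by norm_num)).clm_apply contDiff_const

lemma continuous_pd {f : Eu n → ℝ} (hf : ContDiff ℝ 1 f) (i : Fin n) : Continuous (pd i f) := by
  unfold pd
  exact (hf.continuous_fderiv one_ne_zero).clm_apply continuous_const

lemma continuous_lapl {f : Eu n → ℝ} (hf : ContDiff ℝ 2 f) : Continuous (lapl f) := by
  have : lapl f = fun x => ∑ i, pd i (pd i f) x := rfl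
  rw [this]
  exact continuous_finsetSum _ (fun i _ => continuous_pd (contDiff_pd hf i) i)

lemma fderiv_eq_sum (f : Eu n → ℝ) (x z : Eu n) : fderiv ℝ f x z = ∑ i, z i * pd i f x := by
  have hz : z = ∑ i, z i • (EuclideanSpace.single i (1:ℝ) : Eu n) := by
    ext j
    simp [Finset.sum_apply, Pi.single_apply]
  conv_lhs => rw [hz]
  simp [map_sum, pd]

lemma ibp (f g : Eu n → ℝ) (hf : ContDiff ℝ 2 f) (hg : ContDiff ℝ 1 g) :
    ∫ y, fderiv ℝ f y y * g y * kR y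
      = ∫ y, (∑ i, pd i f y * pd i g y + g y * lapl f y) * kP y := by
  have hP1 : ContDiff ℝ 1 (kP (n := n)) := contDiff_kP.of_le (by norm_num)
  have key : ∀ i : Fin n, ∫ y, fderiv ℝ (fun y => kP y * (g y * pd i f y)) y
      (EuclideanSpace.single i 1) = 0 := by
    intro i
    refine integral_fderiv_zero _ (hP1.mul (hg.mul (contDiff_pd hf i))) ?_ _
    exact hcs_kP.mul_right
  have comp : ∀ i : Fin n, ∀ y, fderiv ℝ (fun y => kP y * (g y * pd i f y)) y
      (EuclideanSpace.single i 1) = - (kR y * y i) * (g y * pd i f y) +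
        kP y * (pd i g y * pd i f y + g y * pd i (pd i f) y) := by
    intro i y
    have d1 : DifferentiableAt ℝ kP y := hP1.differentiable one_ne_zero y
    have d2 : DifferentiableAt ℝ g y := hg.differentiable one_ne_zero y
    have d3 : DifferentiableAt ℝ (pd i f) y := (contDiff_pd hf i).differentiable one_ne_zero y
    rw [fderiv_fun_mul d1 (d2.fun_mul d3), fderiv_fun_mul d2 d3]
    simp only [ContinuousLinearMap.add_apply, ContinuousLinearMap.smul_apply, smul_eq_mul,
      fderiv_kP]
    have : inner ℝ y (EuclideanSpace.single i (1:ℝ)) = y i := by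
      simp [EuclideanSpace.inner_single_right]
    rw [this]
    simp only [pd]; ring
  have hint : ∀ i : Fin n, Integrable (fun y => fderiv ℝ (fun y => kP y * (g y * pd i f y)) y
      (EuclideanSpace.single i 1)) := by
    intro i
    have hc : ContDiff ℝ 1 (fun y => kP y * (g y * pd i f y)) :=
      hP1.mul (hg.mul (contDiff_pd hf i))
    refine Continuous.integrable_of_hasCompactSupport
      ((hc.continuous_fderiv one_ne_zero).clm_apply continuous_const) ?_
    refine HasCompactSupport.fderiv_apply (𝕜 := ℝ) ?_ _
    exact hcs_kP.mul_right
  have hsum : ∫ y, ∑ i, fderiv ℝ (fun y => kP y * (g y * pd i f y)) y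
      (EuclideanSpace.single i 1) = 0 := by
    rw [integral_finsetSum _ (fun i _ => hint i)]
    simp [key]
  have e1 : (fun y => ∑ i, fderiv ℝ (fun y => kP y * (g y * pd i f y)) y
      (EuclideanSpace.single i 1)) = fun y =>
        (∑ i, pd i f y * pd i g y + g y * lapl f y) * kP y - fderiv ℝ f y y * g y * kR y := by
    ext y
    simp only [comp]
    rw [fderiv_eq_sum, lapl_eq, add_mul, Finset.sum_mul, Finset.mul_sum, Finset.sum_mul,
      Finset.sum_mul, Finset.sum_mul, ← Finset.sum_add_distrib, ← Finset.sum_sub_distrib]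
    refine Finset.sum_congr rfl (fun i _ => ?_)
    ring
  rw [e1, integral_sub] at hsum
  · linarith
  · refine Continuous.integrable_of_hasCompactSupport ?_ (hcs_kP.mul_left)
    refine Continuous.mul (Continuous.add ?_ (hg.continuous.mul (continuous_lapl hf))) continuous_kP
    exact continuous_finsetSum _ (fun i _ =>
      (continuous_pd (hf.of_le (by norm_num)) i).mul (continuous_pd hg i))
  · refine Continuous.integrable_of_hasCompactSupport ?_ (hcs_kR.mul_left)
    refine Continuous.mul (Continuous.mul ?_ hg.continuous) continuous_kR
    exact (hf.continuous_fderiv (by norm_num)).clm_apply continuous_id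

lemma hasDerivAt_param (Φ Φ' : ℝ → Eu n → ℝ) (k : Eu n → ℝ)
    (hΦ : Continuous (fun p : ℝ × Eu n => Φ p.1 p.2))
    (hΦ' : Continuous (fun p : ℝ × Eu n => Φ' p.1 p.2))
    (hd : ∀ t y, HasDerivAt (fun t => Φ t y) (Φ' t y) t)
    (hk : Continuous k) (hk0 : HasCompactSupport k) (t₀ : ℝ) :
    HasDerivAt (fun t => ∫ y, Φ t y * k y) (∫ y, Φ' t₀ y * k y) t₀ := by
  obtain ⟨B, hB⟩ := ((isCompact_Icc (a := t₀ - 1) (b := t₀ + 1)).prod hk0).exists_bound_of_continuousOn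
    (f := fun p : ℝ × Eu n => Φ' p.1 p.2) hΦ'.continuousOn
  have hc : ∀ t, Continuous (Φ t) := fun t => hΦ.comp (by fun_prop : Continuous fun y : Eu n => (t, y))
  have hc' : ∀ t, Continuous (Φ' t) :=
    fun t => hΦ'.comp (by fun_prop : Continuous fun y : Eu n => (t, y))
  refine (hasDerivAt_integral_of_dominated_loc_of_deriv_le (F := fun t y => Φ t y * k y)
    (F' := fun t y => Φ' t y * k y) (s := Set.Icc (t₀ - 1) (t₀+1)) (bound := fun y => B * ‖k y‖)
    (Icc_mem_nhds (by linarith) (by linarith)) ?_ ?_ ?_ ?_ ?_ ?_).2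
  · exact Eventually.of_forall (fun t => ((hc t).mul hk).aestronglyMeasurable)
  · exact ((hc t₀).mul hk).integrable_of_hasCompactSupport hk0.mul_left
  · exact ((hc' t₀).mul hk).aestronglyMeasurable
  · refine Eventually.of_forall (fun y t ht => ?_)
    by_cases hy : y ∈ tsupport k
    · rw [norm_mul]
      exact mul_le_mul_of_nonneg_right (hB (t, y) ⟨ht, hy⟩) (norm_nonneg _)
    · rw [image_eq_zero_of_notMem_tsupport hy]; simp
  · exact (continuous_const.mul hk.norm).integrable_of_hasCompactSupport hk0.norm.mul_left
  · exact Eventually.of_forall (fun y t _ => (hd t y).mul_const _)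

end parta

section partb
variable {n : ℕ}

lemma hasFDerivAt_scale {f : Eu n → ℝ} (hf : Differentiable ℝ f) (x : Eu n) (t : ℝ) (y : Eu n) :
    HasFDerivAt (fun y => f (x + t • y)) (t • fderiv ℝ f (x + t • y)) y := by
  have h1 : HasFDerivAt (fun y : Eu n => x + t • y) (t • ContinuousLinearMap.id ℝ (Eu n)) y :=
    ((hasFDerivAt_id y).const_smul t).const_add x
  have := (hf (x + t • y)).hasFDerivAt.comp y h1
  have e : t • fderiv ℝ f (x + t • y)
      = (fderiv ℝ f (x + t • y)).comp (t • ContinuousLinearMap.id ℝ (Eu n)) := by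
    ext z; simp
  rw [e]; exact this

lemma hasDerivAt_scale {f : Eu n → ℝ} (hf : Differentiable ℝ f) (x : Eu n) (t : ℝ) (y : Eu n) :
    HasDerivAt (fun t : ℝ => f (x + t • y)) (fderiv ℝ f (x + t • y) y) t := by
  have h1 : HasDerivAt (fun t : ℝ => x + t • y) y t := by
    simpa using ((hasDerivAt_id t).smul_const y).const_add x
  exact (hf (x + t • y)).hasFDerivAt.comp_hasDerivAt t h1

lemma pd_scale {f : Eu n → ℝ} (hf : Differentiable ℝ f) (x : Eu n) (t : ℝ) (i : Fin n) :
    pd i (fun y => f (x + t • y)) = fun y => t * pd i f (x + t • y) := by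
  ext y
  simp [pd, (hasFDerivAt_scale hf x t y).fderiv]

lemma pd_const_mul (g : Eu n → ℝ) (hg : Differentiable ℝ g) (c : ℝ) (i : Fin n) (y : Eu n) :
    pd i (fun y => c * g y) y = c * pd i g y := by
  simp [pd, fderiv_const_mul (hg y)]

lemma lapl_scale {f : Eu n → ℝ} (hf : ContDiff ℝ 2 f) (x : Eu n) (t : ℝ) (y : Eu n) :
    lapl (fun y => f (x + t • y)) y = t ^ 2 * lapl f (x + t • y) := by
  have hd : Differentiable ℝ f := hf.differentiable two_ne_zero
  rw [lapl_eq, lapl_eq, Finset.mul_sum]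
  refine Finset.sum_congr rfl (fun i _ => ?_)
  have hd1 : Differentiable ℝ (pd i f) := (contDiff_pd hf i).differentiable one_ne_zero
  rw [pd_scale hd, pd_const_mul _ (fun y => (hasFDerivAt_scale hd1 x t y).differentiableAt),
    pd_scale hd1]
  ring

lemma contDiff_scale {f : Eu n → ℝ} {k : WithTop ℕ∞} (hf : ContDiff ℝ k f) (x : Eu n) (t : ℝ) :
    ContDiff ℝ k (fun y => f (x + t • y)) :=
  hf.comp (by fun_prop)

lemma cont_scale : Continuous (fun p : ℝ × (Eu n × Eu n) => p.2.1 + p.1 • p.2.2) := by fun_prop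

lemma mono_mean {f : Eu n → ℝ} (hf : ContDiff ℝ 2 f) (x : Eu n) (R : ℝ)
    (hl : ∀ y ∈ ball x R, 0 ≤ lapl f y) :
    MonotoneOn (fun t : ℝ => ∫ y, f (x + t • y) * kR y) (Set.Icc 0 R) := by
  have hd : Differentiable ℝ f := hf.differentiable two_ne_zero
  have hD : ∀ t : ℝ, HasDerivAt (fun t : ℝ => ∫ y, f (x + t • y) * kR y)
      (∫ y, fderiv ℝ f (x + t • y) y * kR y) t := by
    intro t
    refine hasDerivAt_param (fun t y => f (x + t • y)) (fun t y => fderiv ℝ f (x + t • y) y) kR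
      (hf.continuous.comp (by fun_prop)) ?_ (fun t y => hasDerivAt_scale hd x t y) continuous_kR
      hcs_kR t
    exact ((hf.continuous_fderiv two_ne_zero).comp (by fun_prop)).clm_apply continuous_snd
  refine monotoneOn_of_deriv_nonneg (convex_Icc 0 R)
    (fun t _ => (hD t).continuousAt.continuousWithinAt)
    (fun t _ => (hD t).differentiableAt.differentiableWithinAt) ?_
  intro t ht
  rw [interior_Icc] at ht
  rw [(hD t).deriv]
  have h1 := ibp (fun y => f (x + t • y)) (fun _ => 1) (contDiff_scale hf x t) contDiff_const
  have h2 : ∀ y, fderiv ℝ (fun y => f (x + t • y)) y y * 1 * kR y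
      = t * (fderiv ℝ f (x + t • y) y * kR y) := by
    intro y; rw [(hasFDerivAt_scale hd x t y).fderiv]; simp; ring
  have h3 : 0 ≤ ∫ y, (∑ i, pd i (fun y => f (x + t • y)) y * pd i (fun _ => (1:ℝ)) y
      + 1 * lapl (fun y => f (x + t • y)) y) * kP y := by
    refine integral_nonneg (fun y => ?_)
    by_cases hy : 1 ≤ ‖y‖
    · simp [kP_zero hy]
    · push Not at hy
      have : x + t • y ∈ ball x R := by
        simp [norm_smul, abs_of_pos ht.1]
        nlinarith [ht.1, ht.2]
      have := hl _ this
      have hz : ∀ i : Fin n, pd i (fun _ : Eu n => (1:ℝ)) y = 0 := by intro i; simp [pd]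
      simp only [hz, lapl_scale hf, Pi.zero_apply]
      have := kP_nonneg y
      simp; positivity
  rw [← h1] at h3
  simp only [h2] at h3
  rw [integral_const_mul] at h3
  exact nonneg_of_mul_nonneg_right h3 ht.1

noncomputable def cR (n : ℕ) : ℝ := ∫ y : Eu n, kR y

lemma integrable_kR : Integrable (kR (n := n)) := continuous_kR.integrable_of_hasCompactSupport hcs_kR

lemma cR_pos : 0 < cR n := by
  unfold cR
  refine (continuous_kR.integral_pos_of_hasCompactSupport_nonneg_nonzero hcs_kR kR_nonneg (x := 0) ?_)
  have := kR_ge (y := (0 : Eu n)) (by simp; norm_num)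
  linarith

lemma mean_le_global {f : Eu n → ℝ} (hf : ContDiff ℝ 2 f) (x : Eu n) {R : ℝ} (hR : 0 ≤ R)
    (hl : ∀ y ∈ ball x R, 0 ≤ lapl f y) :
    f x * cR n ≤ ∫ y, f (x + R • y) * kR y := by
  have := mono_mean hf x R hl ⟨le_rfl, hR⟩ ⟨hR, le_rfl⟩ hR
  simpa [integral_const_mul, cR] using this

lemma exists_ext {f : Eu n → ℝ} {x : Eu n} {R R' : ℝ} (hf : ContDiffOn ℝ 2 f (ball x R'))
    (hR : 0 < R) (hRR : R < R') :
    ∃ g : Eu n → ℝ, ContDiff ℝ 2 g ∧ ∀ y ∈ ball x R, g y = f y := by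
  let b : ContDiffBump x := ⟨R, (R + R')/2, hR, by linarith⟩
  refine ⟨fun y => b y * f y, ?_, fun y hy => ?_⟩
  · rw [contDiff_iff_contDiffAt]
    intro y
    by_cases hy : y ∈ ball x R'
    · exact b.contDiffAt.mul (hf.contDiffAt (isOpen_ball.mem_nhds hy))
    · have : (fun y => b y * f y) =ᶠ[nhds y] fun _ => 0 := by
        have hy' : y ∈ (closedBall x ((R + R')/2))ᶜ := by
          simp at hy ⊢; linarith
        filter_upwards [isClosed_closedBall.isOpen_compl.mem_nhds hy'] with z hz
        rw [b.zero_of_le_dist, zero_mul]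
        simp at hz; exact hz.le
      exact contDiffAt_const.congr_of_eventuallyEq this
  · simp only
    rw [b.one_of_mem_closedBall (ball_subset_closedBall hy), one_mul]

lemma lapl_congr {f g : Eu n → ℝ} {x : Eu n} (h : f =ᶠ[nhds x] g) : lapl f x = lapl g x := by
  rw [lapl_eq, lapl_eq]
  refine Finset.sum_congr rfl (fun i _ => ?_)
  have h1 : pd i f =ᶠ[nhds x] pd i g := by
    filter_upwards [h.fderiv (𝕜 := ℝ)] with y hy
    simp [pd, hy]
  simp only [pd] at h1 ⊢
  rw [h1.fderiv_eq]

lemma mean_le {f : Eu n → ℝ} {x : Eu n} {R R' : ℝ} (hf : ContDiffOn ℝ 2 f (ball x R'))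
    (hR : 0 < R) (hRR : R < R') (hl : ∀ y ∈ ball x R', 0 ≤ lapl f y) :
    f x * cR n ≤ ∫ y, f (x + R • y) * kR y := by
  obtain ⟨g, hg, hgf⟩ := exists_ext hf hR hRR
  have hl' : ∀ y ∈ ball x R, 0 ≤ lapl g y := by
    intro y hy
    rw [lapl_congr (g := f) (by filter_upwards [isOpen_ball.mem_nhds hy] with z hz using hgf z hz)]
    exact hl y (ball_subset_ball hRR.le hy)
  have := mean_le_global hg x hR.le hl'
  rw [hgf x (mem_ball_self hR)] at this
  refine this.trans_eq (integral_congr_ae (Eventually.of_forall (fun y => ?_)))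
  by_cases hy : 1 ≤ ‖y‖
  · simp [kR_zero hy]
  · push Not at hy
    simp only
    rw [hgf]
    simp [norm_smul, abs_of_pos hR]; nlinarith

section freq
variable (f : Eu n → ℝ) (x : Eu n)

noncomputable def FF (t : ℝ) : ℝ := ∫ y, f (x + t • y) ^ 2 * kR y
noncomputable def QQ (t : ℝ) : ℝ := ∫ y, (t ^ 2 * ∑ i, pd i f (x + t • y) ^ 2) * kP y
noncomputable def BB (t : ℝ) : ℝ := ∫ y, (t * fderiv ℝ f (x + t • y) y) ^ 2 * kR y

lemma FF_nonneg (t : ℝ) : 0 ≤ FF f x t :=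
  integral_nonneg (fun y => mul_nonneg (sq_nonneg _) (kR_nonneg y))

lemma QQ_nonneg (t : ℝ) : 0 ≤ QQ f x t :=
  integral_nonneg (fun y => mul_nonneg (mul_nonneg (sq_nonneg _)
    (Finset.sum_nonneg fun i _ => sq_nonneg _)) (kP_nonneg y))

variable {f x} (hf : ContDiff ℝ 2 f) {R : ℝ} (hl : ∀ y ∈ ball x R, lapl f y = 0)
include hf hl

lemma lapl_kP_zero {t : ℝ} (ht : t ∈ Set.Ioo 0 R) (y : Eu n) :
    lapl (fun y => f (x + t • y)) y * kP y = 0 := by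
  by_cases hy : 1 ≤ ‖y‖
  · simp [kP_zero hy]
  · push Not at hy
    have : x + t • y ∈ ball x R := by
      simp [norm_smul, abs_of_pos ht.1]
      nlinarith [ht.1, ht.2]
    rw [lapl_scale hf, hl _ this]; simp

lemma QQ_eq {t : ℝ} (ht : t ∈ Set.Ioo 0 R) :
    QQ f x t = ∫ y, (t * fderiv ℝ f (x + t • y) y) * f (x + t • y) * kR y := by
  have hd : Differentiable ℝ f := hf.differentiable two_ne_zero
  have h := ibp (fun y => f (x + t • y)) (fun y => f (x + t • y)) (contDiff_scale hf x t)
    ((contDiff_scale hf x t).of_le (by norm_num))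
  unfold QQ
  convert h.symm using 1
  · congr 1; ext y
    have := lapl_kP_zero hf hl ht y
    rw [add_mul, mul_assoc (f _), this, mul_zero, add_zero, pd_scale_sum]
  · congr 1; ext y
    rw [(hasFDerivAt_scale hd x t y).fderiv]; simp
where
  pd_scale_sum {t : ℝ} {y : Eu n} : t ^ 2 * ∑ i, pd i f (x + t • y) ^ 2 =
    ∑ i, pd i (fun y => f (x + t • y)) y * pd i (fun y => f (x + t • y)) y := by
    rw [Finset.mul_sum]
    refine Finset.sum_congr rfl (fun i _ => ?_)
    rw [pd_scale (hf.differentiable two_ne_zero)]; ring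

lemma FF_deriv {t : ℝ} (ht : t ∈ Set.Ioo 0 R) : HasDerivAt (FF f x) (2 / t * QQ f x t) t := by
  have hd : Differentiable ℝ f := hf.differentiable two_ne_zero
  have := hasDerivAt_param (fun t y => f (x + t • y) ^ 2)
    (fun t y => 2 * f (x + t • y) * fderiv ℝ f (x + t • y) y) kR
      ((hf.continuous.comp (by fun_prop)).pow 2) ?_ (fun t y => ?_) continuous_kR
      hcs_kR t
  · have e : 2 / t * QQ f x t = ∫ y, 2 * f (x + t • y) * fderiv ℝ f (x + t • y) y * kR y := by
      rw [QQ_eq hf hl ht, ← integral_const_mul]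
      congr 1; ext y
      have := ht.1.ne'
      field_simp
    rw [e]; exact this
  · refine (continuous_const.mul (hf.continuous.comp (by fun_prop))).mul ?_
    exact ((hf.continuous_fderiv two_ne_zero).comp (by fun_prop)).clm_apply continuous_snd
  · simpa using (hasDerivAt_scale hd x t y).fun_pow 2

omit hl in
lemma pd_euler (i : Fin n) (y : Eu n) :
    pd i (fun y => fderiv ℝ f y y) y = pd i f y + fderiv ℝ (pd i f) y y := by
  have hd2 : DifferentiableAt ℝ (fderiv ℝ f) y :=
    (hf.fderiv_right (m := 1) (by norm_num)).differentiable one_ne_zero y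
  have h1 : HasFDerivAt (fun y => fderiv ℝ f y y) _ y := hd2.hasFDerivAt.clm_apply (hasFDerivAt_id y)
  have h2 : HasFDerivAt (pd i f) _ y :=
    hd2.hasFDerivAt.clm_apply (hasFDerivAt_const (EuclideanSpace.single i (1:ℝ) : Eu n) y)
  have hsym : IsSymmSndFDerivAt ℝ f y := hf.contDiffAt.isSymmSndFDerivAt (by simp)
  rw [h2.fderiv]
  simp only [pd] at *
  rw [h1.fderiv]
  simp
  exact hsym.eq _ _

omit hl in
lemma contDiff_euler : ContDiff ℝ 1 (fun y => fderiv ℝ f y y) :=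
  (hf.fderiv_right (m := 1) (by norm_num)).clm_apply contDiff_id

lemma QQ_deriv {t : ℝ} (ht : t ∈ Set.Ioo 0 R) : HasDerivAt (QQ f x) (2 / t * BB f x t) t := by
  have hd : Differentiable ℝ f := hf.differentiable two_ne_zero
  have hdi : ∀ i, Differentiable ℝ (pd i f) :=
    fun i => (contDiff_pd hf i).differentiable one_ne_zero
  have hcp : ∀ i : Fin n, Continuous fun p : ℝ × Eu n => pd i f (x + p.1 • p.2) := fun i =>
    (continuous_pd (hf.of_le (by norm_num)) i).comp (by fun_prop)
  have := hasDerivAt_param (fun t y => t ^ 2 * ∑ i, pd i f (x + t • y) ^ 2)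
    (fun t y => 2 * t * ∑ i, pd i f (x + t • y) ^ 2 +
      t ^ 2 * ∑ i, 2 * pd i f (x + t • y) * fderiv ℝ (pd i f) (x + t • y) y) kP
      ?_ ?_ (fun t y => ?_) continuous_kP hcs_kP t
  · have e : 2 / t * BB f x t = ∫ y, (2 * t * ∑ i, pd i f (x + t • y) ^ 2 +
      t ^ 2 * ∑ i, 2 * pd i f (x + t • y) * fderiv ℝ (pd i f) (x + t • y) y) * kP y := by
      have hU := contDiff_scale hf x t
      have h := ibp (fun y => f (x + t • y)) _ hU (contDiff_euler hU)
      have hB : BB f x t = ∫ y, fderiv ℝ (fun y => f (x + t • y)) y y *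
          fderiv ℝ (fun y => f (x + t • y)) y y * kR y := by
        unfold BB; congr 1; ext y
        rw [(hasFDerivAt_scale hd x t y).fderiv]
        simp only [_root_.smul_apply, smul_eq_mul]; ring
      rw [hB, h, ← integral_const_mul]
      congr 1; ext y
      have := lapl_kP_zero hf hl ht y
      rw [add_mul, mul_assoc (fderiv ℝ _ _ _), this, mul_zero, add_zero, ← mul_assoc]
      congr 1
      rw [Finset.mul_sum, Finset.mul_sum, Finset.mul_sum, ← Finset.sum_add_distrib]
      refine Finset.sum_congr rfl (fun i _ => ?_)
      rw [pd_euler hU, pd_scale hd, fderiv_const_mul (hasFDerivAt_scale (hdi i) x t y).differentiableAt,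
        (hasFDerivAt_scale (hdi i) x t y).fderiv]
      simp
      have := ht.1.ne'
      field_simp
    rw [e]; exact this
  · refine Continuous.mul (by fun_prop) (continuous_finsetSum _ fun i _ => (hcp i).pow 2)
  · refine Continuous.add (Continuous.mul (by fun_prop)
      (continuous_finsetSum _ fun i _ => (hcp i).pow 2)) (Continuous.mul (by fun_prop)
      (continuous_finsetSum _ fun i _ => (continuous_const.mul (hcp i)).mul ?_))
    exact (((contDiff_pd hf i).continuous_fderiv one_ne_zero).comp (by fun_prop)).clm_apply
      continuous_snd
  · refine HasDerivAt.mul (by simpa using hasDerivAt_pow 2 t) ?_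
    refine HasDerivAt.fun_sum (fun i _ => ?_)
    simpa using (hasDerivAt_scale (hdi i) x t y).fun_pow 2

lemma QQ_sq_le {t : ℝ} (ht : t ∈ Set.Ioo 0 R) : QQ f x t ^ 2 ≤ BB f x t * FF f x t := by
  have c1 : Continuous fun y => f (x + t • y) := hf.continuous.comp (by fun_prop)
  have c2 : Continuous fun y => fderiv ℝ f (x + t • y) y :=
    ((hf.continuous_fderiv two_ne_zero).comp (by fun_prop)).clm_apply continuous_id
  have i1 : Integrable fun y => f (x + t • y) ^ 2 * kR y :=
    ((c1.pow 2).mul continuous_kR).integrable_of_hasCompactSupport hcs_kR.mul_left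
  have i2 : Integrable fun y => (t * fderiv ℝ f (x + t • y) y) ^ 2 * kR y :=
    (((continuous_const.mul c2).pow 2).mul continuous_kR).integrable_of_hasCompactSupport
      hcs_kR.mul_left
  have i3 : Integrable fun y => (t * fderiv ℝ f (x + t • y) y) * f (x + t • y) * kR y :=
    (((continuous_const.mul c2).mul c1).mul continuous_kR).integrable_of_hasCompactSupport
      hcs_kR.mul_left
  have key : ∀ s : ℝ, 0 ≤ FF f x t * (s * s) + (2 * QQ f x t) * s + BB f x t := by
    intro s
    have h0 : 0 ≤ ∫ y, (s * f (x + t • y) + t * fderiv ℝ f (x + t • y) y) ^ 2 * kR y :=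
      integral_nonneg (fun y => mul_nonneg (sq_nonneg _) (kR_nonneg y))
    have e : ∀ y, (s * f (x + t • y) + t * fderiv ℝ f (x + t • y) y) ^ 2 * kR y =
      (s * s) * (f (x + t • y) ^ 2 * kR y) +
      (2 * s) * ((t * fderiv ℝ f (x + t • y) y) * f (x + t • y) * kR y) +
      (t * fderiv ℝ f (x + t • y) y) ^ 2 * kR y := by intro y; ring
    simp only [e] at h0
    rw [integral_add ((i1.const_mul (s * s)).fun_add (i3.const_mul (2 * s))) i2,
      integral_add (i1.const_mul _) (i3.const_mul _), integral_const_mul, integral_const_mul,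
      ← QQ_eq hf hl ht] at h0
    unfold FF BB
    linarith
  have := discrim_le_zero key
  unfold discrim at this
  nlinarith

lemma nu_mono {ε : ℝ} (hε : 0 < ε) :
    MonotoneOn (fun t => QQ f x t / (FF f x t + ε)) (Set.Ioo 0 R) := by
  have hpos : ∀ t, 0 < FF f x t + ε := fun t => by have := FF_nonneg f x t; linarith
  have hD : ∀ t ∈ Set.Ioo 0 R, HasDerivAt (fun t => QQ f x t / (FF f x t + ε))
      ((2 / t * BB f x t * (FF f x t + ε) - QQ f x t * (2 / t * QQ f x t)) / (FF f x t + ε) ^ 2) t :=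
    fun t ht => (QQ_deriv hf hl ht).div ((FF_deriv hf hl ht).add_const ε) (hpos t).ne'
  refine monotoneOn_of_deriv_nonneg (convex_Ioo 0 R)
    (fun t ht => (hD t ht).continuousAt.continuousWithinAt)
    (fun t ht => (hD t (interior_subset ht)).differentiableAt.differentiableWithinAt) ?_
  intro t ht
  have ht := interior_subset ht
  rw [(hD t ht).deriv]
  refine div_nonneg ?_ (sq_nonneg _)
  have h1 := QQ_sq_le hf hl ht
  have h2 : 0 ≤ BB f x t := integral_nonneg (fun y => mul_nonneg (sq_nonneg _) (kR_nonneg y))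
  have h3 : 0 ≤ 2 / t := by have := ht.1; positivity
  have : 2 / t * BB f x t * (FF f x t + ε) - QQ f x t * (2 / t * QQ f x t)
    = 2 / t * (BB f x t * FF f x t - QQ f x t ^ 2) + 2 / t * (BB f x t * ε) := by ring
  rw [this]
  have := mul_nonneg h3 (sub_nonneg.2 h1)
  positivity

lemma FF_doubling {a b : ℝ} (ha : 0 < a) (hab : a ≤ b) (hb : 2 * b < R) :
    FF f x (2 * a) * FF f x b ≤ FF f x a * FF f x (2 * b) := by
  have key : ∀ ε > 0, (FF f x (2 * a) + ε) * (FF f x b + ε) ≤ (FF f x a + ε) * (FF f x (2 * b) + ε) := by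
    intro ε hε
    have hpos : ∀ t, 0 < FF f x t + ε := fun t => by have := FF_nonneg f x t; linarith
    have hD : ∀ t ∈ Set.Ioo 0 (R/2), HasDerivAt (fun t => (FF f x (2 * t) + ε) / (FF f x t + ε))
      (((2 / (2 * t) * QQ f x (2 * t)) * 2 * (FF f x t + ε) - (FF f x (2 * t) + ε) * (2 / t * QQ f x t))
        / (FF f x t + ε) ^ 2) t := by
      intro t ht
      have h2 : 2 * t ∈ Set.Ioo 0 R := ⟨by linarith [ht.1], by linarith [ht.2]⟩
      have h1 : t ∈ Set.Ioo 0 R := ⟨ht.1, by linarith [h2.2, h2.1]⟩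
      have hm : HasDerivAt (fun t : ℝ => 2 * t) 2 t := by simpa using (hasDerivAt_id t).const_mul 2
      have := HasDerivAt.comp t (FF_deriv hf hl h2) hm
      exact (this.add_const ε).div ((FF_deriv hf hl h1).add_const ε) (hpos t).ne'
    have hm : MonotoneOn (fun t => (FF f x (2 * t) + ε) / (FF f x t + ε)) (Set.Ioo 0 (R/2)) := by
      refine monotoneOn_of_deriv_nonneg (convex_Ioo 0 (R/2))
        (fun t ht => (hD t ht).continuousAt.continuousWithinAt)
        (fun t ht => (hD t (interior_subset ht)).differentiableAt.differentiableWithinAt) ?_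
      intro t ht
      have ht := interior_subset ht
      have h2 : 2 * t ∈ Set.Ioo 0 R := ⟨by linarith [ht.1], by linarith [ht.2]⟩
      have h1 : t ∈ Set.Ioo 0 R := ⟨ht.1, by linarith [h2.2, h2.1]⟩
      rw [(hD t ht).deriv]
      refine div_nonneg ?_ (sq_nonneg _)
      have := nu_mono hf hl hε h1 h2 (by linarith [ht.1])
      simp only at this
      rw [div_le_div_iff₀ (hpos _) (hpos _)] at this
      have h3 : 0 ≤ 2 / t := by have := ht.1; positivity
      have e : (2 / (2 * t) * QQ f x (2 * t)) * 2 * (FF f x t + ε) - (FF f x (2 * t) + ε) * (2 / t * QQ f x t)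
        = 2 / t * (QQ f x (2 * t) * (FF f x t + ε) - QQ f x t * (FF f x (2 * t) + ε)) := by
        have := ht.1.ne'
        field_simp
      rw [e]
      exact mul_nonneg h3 (sub_nonneg.2 this)
    have := hm ⟨ha, by linarith⟩ ⟨by linarith, by linarith⟩ hab
    simp only at this
    rw [div_le_div_iff₀ (hpos _) (hpos _)] at this
    linarith
  have h1 : Tendsto (fun ε : ℝ => (FF f x (2 * a) + ε) * (FF f x b + ε)) (nhdsWithin 0 (Set.Ioi 0))
      (nhds ((FF f x (2 * a) + 0) * (FF f x b + 0))) :=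
    ((by fun_prop : Continuous fun ε : ℝ => (FF f x (2 * a) + ε) * (FF f x b + ε)).tendsto 0).mono_left
      nhdsWithin_le_nhds
  have h2 : Tendsto (fun ε : ℝ => (FF f x a + ε) * (FF f x (2 * b) + ε)) (nhdsWithin 0 (Set.Ioi 0))
      (nhds ((FF f x a + 0) * (FF f x (2 * b) + 0))) :=
    ((by fun_prop : Continuous fun ε : ℝ => (FF f x a + ε) * (FF f x (2 * b) + ε)).tendsto 0).mono_left
      nhdsWithin_le_nhds
  simpa using le_of_tendsto_of_tendsto h1 h2 (by
    filter_upwards [self_mem_nhdsWithin] with ε hε using key ε hε)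
end freq

end partb

section partc
open scoped Pointwise in
lemma eu_norm_le {k : ℕ} (x : Eu k) {M : ℝ} (hM : 0 ≤ M) (h : ∀ i, |x i| ≤ M) : ‖x‖ ≤ k * M := by
  have h1 : ‖x‖^2 ≤ (k * M)^2 := by
    rw [EuclideanSpace.norm_sq_eq]
    calc ∑ i, ‖x i‖^2 ≤ ∑ _i : Fin k, M^2 := by
          apply Finset.sum_le_sum; intro i _
          exact pow_le_pow_left₀ (norm_nonneg _) (h i) 2
      _ = k * M^2 := by simp
      _ ≤ (k*M)^2 := by
          rw [mul_pow]
          apply mul_le_mul_of_nonneg_right _ (sq_nonneg M)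
          rcases Nat.eq_zero_or_pos k with h | h
          · subst h; simp
          · have : (1:ℝ) ≤ k := by exact_mod_cast h
            nlinarith
  exact (sq_le_sq₀ (norm_nonneg _) (by positivity)).1 h1

lemma eu_coord_le {k : ℕ} (x : Eu k) (i : Fin k) : |x i| ≤ ‖x‖ := by
  have := PiLp.norm_apply_le x i
  simpa using this

/-- The point over `a` on the face `i` (value `s`) of the cube. -/
noncomputable def faceZ {m : ℕ} (i : Fin (m+1)) (s : ℝ) (a : Fin m → ℝ) : Eu (m+1) :=
  WithLp.toLp 2 (Fin.insertNth (α := fun _ => ℝ) i s a)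

@[simp] lemma faceZ_same {m : ℕ} (i : Fin (m+1)) (s : ℝ) (a : Fin m → ℝ) : faceZ i s a i = s := by
  simp [faceZ]
@[simp] lemma faceZ_above {m : ℕ} (i : Fin (m+1)) (s : ℝ) (a : Fin m → ℝ) (j : Fin m) :
    faceZ i s a (i.succAbove j) = a j := by
  simp [faceZ]

lemma faceZ_norm_ge {m : ℕ} (i : Fin (m+1)) {s : ℝ} (hs : |s| = 1) (a : Fin m → ℝ) :
    1 ≤ ‖faceZ i s a‖ := by
  have := eu_coord_le (faceZ i s a) i
  simpa [hs] using this

lemma faceZ_norm_le {m : ℕ} (i : Fin (m+1)) {s : ℝ} (hs : |s| = 1) (a : Fin m → ℝ)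
    (ha : ∀ j, |a j| ≤ 1) : ‖faceZ i s a‖ ≤ m + 1 := by
  have := eu_norm_le (faceZ i s a) (M := 1) zero_le_one (by
    intro j
    rcases Fin.eq_self_or_eq_succAbove i j with h | ⟨j', h⟩
    · subst h; simp [hs]
    · subst h; simpa using ha j')
  simpa using this

lemma faceZ_dist {m : ℕ} (i : Fin (m+1)) (s : ℝ) (a b : Fin m → ℝ) :
    ‖faceZ i s a - faceZ i s b‖ ≤ (m+1) * ‖a - b‖ := by
  have := eu_norm_le (faceZ i s a - faceZ i s b) (M := ‖a - b‖) (norm_nonneg _) (by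
    intro j
    rcases Fin.eq_self_or_eq_succAbove i j with h | ⟨j', h⟩
    · subst h; simp
    · subst h
      simpa using norm_le_pi_norm (a - b) j')
  simpa using this

/-- The chart of the sphere. -/
noncomputable def faceC {m : ℕ} (i : Fin (m+1)) (s : ℝ) (a : Fin m → ℝ) : Eu (m+1) :=
  ‖faceZ i s a‖⁻¹ • faceZ i s a

lemma normalize_dist {V : Type*} [NormedAddCommGroup V] [NormedSpace ℝ V] {x y : V}
    (hx : 1 ≤ ‖x‖) (hy : 1 ≤ ‖y‖) : ‖‖x‖⁻¹ • x - ‖y‖⁻¹ • y‖ ≤ 2 * ‖x - y‖ := by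
  have e : ‖x‖⁻¹ • x - ‖y‖⁻¹ • y = ‖x‖⁻¹ • (x - y) + (‖x‖⁻¹ - ‖y‖⁻¹) • y := by
    rw [smul_sub, sub_smul]; abel
  rw [e]
  have hx0 : 0 < ‖x‖ := by linarith
  have hy0 : 0 < ‖y‖ := by linarith
  have hi : ‖x‖⁻¹ ≤ 1 := inv_le_one_of_one_le₀ hx
  have h1 : ‖‖x‖⁻¹ • (x - y)‖ ≤ ‖x - y‖ := by
    rw [norm_smul, norm_inv, norm_norm]
    exact mul_le_of_le_one_left (norm_nonneg _) hi
  have h2 : ‖(‖x‖⁻¹ - ‖y‖⁻¹) • y‖ ≤ ‖x - y‖ := by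
    rw [norm_smul]
    have : (‖x‖⁻¹ - ‖y‖⁻¹) = (‖y‖ - ‖x‖) * ‖x‖⁻¹ * ‖y‖⁻¹ := by field_simp
    rw [this, norm_mul, norm_mul, norm_inv, norm_inv, norm_norm, norm_norm, mul_assoc,
      inv_mul_cancel₀ hy0.ne', mul_one]
    have h3 : ‖‖y‖ - ‖x‖‖ ≤ ‖x - y‖ := by
      rw [norm_sub_rev x y]; exact abs_norm_sub_norm_le y x
    calc _ ≤ ‖‖y‖ - ‖x‖‖ * 1 := by gcongr
      _ ≤ _ := by simpa using h3
  calc _ ≤ _ := norm_add_le _ _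
    _ ≤ _ := by linarith

lemma faceC_lip {m : ℕ} (i : Fin (m+1)) {s : ℝ} (hs : |s| = 1) :
    LipschitzWith (2 * (m+1)) (faceC i s) := by
  apply LipschitzWith.of_dist_le_mul
  intro a b
  rw [dist_eq_norm, dist_eq_norm]
  unfold faceC
  have h1 := normalize_dist (faceZ_norm_ge i hs a) (faceZ_norm_ge i hs b)
  have h2 := faceZ_dist i s a b
  push_cast
  linarith

lemma faceC_norm {m : ℕ} (i : Fin (m+1)) {s : ℝ} (hs : |s| = 1) (a : Fin m → ℝ) :
    ‖faceC i s a‖ = 1 := by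
  have := faceZ_norm_ge i hs a
  unfold faceC
  rw [norm_smul, norm_inv, norm_norm, inv_mul_cancel₀ (by linarith)]

lemma exists_face {m : ℕ} (θ : Eu (m+1)) (hθ : ‖θ‖ = 1) :
    ∃ i : Fin (m+1), ∃ s : ℝ, (s = 1 ∨ s = -1) ∧ ∃ a : Fin m → ℝ, (∀ j, |a j| ≤ 1) ∧
      faceC i s a = θ := by
  obtain ⟨i, -, hi⟩ := Finset.exists_max_image Finset.univ (fun i => |θ i|) ⟨0, Finset.mem_univ _⟩
  have hpos : 0 < |θ i| := by
    by_contra h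
    have h0 : |θ i| = 0 := le_antisymm (not_lt.1 h) (abs_nonneg _)
    have : θ = 0 := by
      ext j
      have := hi j (Finset.mem_univ _)
      rw [h0] at this
      simpa using this
    rw [this] at hθ; simp at hθ
  have key : ∀ s : ℝ, |s| = 1 → θ i = s * |θ i| → faceC i s (fun j => θ (i.succAbove j) / |θ i|) = θ := by
    intro s hs hsi
    have hz : faceZ i s (fun j => θ (i.succAbove j) / |θ i|) = |θ i|⁻¹ • θ := by
      ext j
      rcases Fin.eq_self_or_eq_succAbove i j with h | ⟨j', h⟩
      · subst h
        simp only [faceZ_same, PiLp.smul_apply, smul_eq_mul]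
        field_simp; linarith
      · subst h
        simp only [faceZ_above, PiLp.smul_apply, smul_eq_mul]
        field_simp
    unfold faceC
    rw [hz, norm_smul, hθ, smul_smul]
    simp [hpos.ne']
  refine ⟨i, if 0 ≤ θ i then 1 else -1, by split_ifs <;> simp, fun j => θ (i.succAbove j) / |θ i|, ?_, ?_⟩
  · intro j
    rw [abs_div, abs_abs, div_le_one hpos]
    exact hi _ (Finset.mem_univ _)
  · apply key
    · split_ifs <;> simp
    · split_ifs with h
      · rw [abs_of_nonneg h]; ring
      · rw [abs_of_neg (not_le.1 h)]; ring

open scoped Pointwise in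
lemma face_cone {m : ℕ} (i : Fin (m+1)) {s : ℝ} (hs : |s| = 1) (E : Set (Eu (m+1)))
    (A : Set (Fin m → ℝ)) (hA : MeasurableSet A) (hA1 : ∀ a ∈ A, (∀ j, |a j| ≤ 1) ∧ faceC i s a ∈ E) :
    ENNReal.ofReal ((1/(2*(m+1)))^(m+1)) * volume A ≤ volume (Set.Ioo (0:ℝ) 1 • E) := by
  set δ : ℝ := 1/(2*(m+1)) with hδ
  have hδ0 : 0 < δ := by positivity
  let K : Set (ℝ × (Fin m → ℝ)) := {p | s * p.1 ∈ Set.Ioo δ (2*δ) ∧ (s * p.1)⁻¹ • p.2 ∈ A}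
  have hKm : MeasurableSet K := by
    apply MeasurableSet.inter
    · exact (measurable_const.mul measurable_fst) measurableSet_Ioo
    · have : Measurable (fun p : ℝ × (Fin m → ℝ) => (s * p.1)⁻¹ • p.2) :=
        (measurable_const.mul measurable_fst).inv.smul measurable_snd
      exact this hA
  have hK : ENNReal.ofReal (δ^(m+1)) * volume A ≤ volume K := by
    rw [Measure.volume_eq_prod, Measure.prod_apply hKm]
    have hI : volume {w : ℝ | s * w ∈ Set.Ioo δ (2*δ)} = ENNReal.ofReal δ := by
      have h := Real.volume_preimage_mul_left (a := s) (by intro h; simp [h] at hs) (Set.Ioo δ (2*δ))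
      have e : 2 * δ - δ = δ := by ring
      simp only [abs_inv, hs, inv_one, ENNReal.ofReal_one, one_mul, Real.volume_Ioo, e] at h
      exact h
    have hIm : MeasurableSet {w : ℝ | s * w ∈ Set.Ioo δ (2*δ)} :=
      (measurable_const.mul measurable_id) measurableSet_Ioo
    calc ENNReal.ofReal (δ^(m+1)) * volume A
        = ∫⁻ _w in {w : ℝ | s * w ∈ Set.Ioo δ (2*δ)}, ENNReal.ofReal (δ^m) * volume A := by
          rw [setLIntegral_const, hI, pow_succ, ENNReal.ofReal_mul (by positivity)]; ring
      _ ≤ ∫⁻ w in {w : ℝ | s * w ∈ Set.Ioo δ (2*δ)}, volume (Prod.mk w ⁻¹' K) := by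
          apply setLIntegral_mono' hIm
          intro w hw
          have hw' : s * w ∈ Set.Ioo δ (2*δ) := hw
          have hw0 : 0 < s * w := hδ0.trans hw'.1
          have e : Prod.mk w ⁻¹' K = (fun x => (s*w)⁻¹ • x) ⁻¹' A := by
            ext y; simp only [K, Set.mem_preimage, Set.mem_setOf_eq]
            exact ⟨fun h => h.2, fun h => ⟨hw', h⟩⟩
          rw [e, Measure.addHaar_preimage_smul _ (by positivity)]
          gcongr
          simp only [Module.finrank_fin_fun, inv_pow, inv_inv]
          rw [abs_of_pos (by positivity)]
          exact pow_le_pow_left₀ hδ0.le hw'.1.le m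
      _ ≤ _ := setLIntegral_le_lintegral _ _
  refine hK.trans ?_
  have hmp1 := volume_preserving_piFinSuccAbove (fun _ : Fin (m+1) => ℝ) i
  have hmp2 := PiLp.volume_preserving_ofLp (Fin (m+1))
  have hmp := hmp1.comp hmp2
  rw [← hmp.measure_preimage hKm.nullMeasurableSet]
  apply measure_mono
  intro x hx
  obtain ⟨hx1, hx2⟩ := hx
  simp only [Function.comp, MeasurableEquiv.piFinSuccAbove, Fin.insertNthEquiv, MeasurableEquiv.coe_mk,
    Equiv.symm, Equiv.coe_fn_mk] at hx1 hx2
  set w := s * x i with hw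
  have hw0 : 0 < w := hδ0.trans hx1.1
  obtain ⟨ha, hE⟩ := hA1 _ hx2
  set a := w⁻¹ • i.removeNth x.ofLp with hadef
  have hz : x = w • faceZ i s a := by
    have hss : s * s = 1 := by rw [← abs_mul_abs_self, hs, one_mul]
    ext j
    rcases Fin.eq_self_or_eq_succAbove i j with h | ⟨j', h⟩
    · subst h
      simp only [faceZ_same, PiLp.smul_apply, smul_eq_mul, hw]
      linear_combination (-x j) * hss
    · subst h
      simp only [faceZ_above, PiLp.smul_apply, smul_eq_mul, hadef, Pi.smul_apply, Fin.removeNth]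
      field_simp
  have hn1 := faceZ_norm_ge i hs a
  have hn2 := faceZ_norm_le i hs a ha
  refine ⟨w * ‖faceZ i s a‖, ⟨by positivity, ?_⟩, faceC i s a, hE, ?_⟩
  · have h3 : 2 * δ * (m+1) = 1 := by rw [hδ]; field_simp
    calc w * ‖faceZ i s a‖ < (2*δ) * ‖faceZ i s a‖ := by
          apply mul_lt_mul_of_pos_right hx1.2; linarith
      _ ≤ 2*δ*(m+1) := by gcongr
      _ = 1 := h3
  · simp only [faceC, smul_smul]
    rw [mul_assoc, mul_inv_cancel₀ (by linarith), mul_one, ← hz]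

end partc

section partd
open scoped Pointwise in
lemma hausdorff_sphere_le (m : ℕ) : ∃ c : ℝ, 0 < c ∧ ∀ E : Set (sphere (0 : Eu (m+1)) 1),
    MeasurableSet E → μH[(m:ℝ)] (Subtype.val '' E) ≤
      ENNReal.ofReal c * (volume : Measure (Eu (m+1))).toSphere E := by
  set δ : ℝ := (1/(2*(m+1)))^(m+1) with hδ
  have hδ0 : 0 < δ := by positivity
  set L : ℝ := (2*(m+1))^m with hL
  have hL0 : 0 < L := by positivity
  refine ⟨2 * (m+1) * (L * δ⁻¹), by positivity, ?_⟩
  intro E hE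
  have hE' : MeasurableSet (Subtype.val '' E : Set (Eu (m+1))) :=
    (MeasurableEmbedding.subtype_coe isClosed_sphere.measurableSet).measurableSet_image.2 hE
  let A : Fin (m+1) × Bool → Set (Fin m → ℝ) := fun p =>
    {a | (∀ j, |a j| ≤ 1) ∧ faceC p.1 (if p.2 then 1 else -1) a ∈ (Subtype.val '' E)}
  have hs : ∀ b : Bool, |(if b then (1:ℝ) else -1)| = 1 := by intro b; cases b <;> simp
  have hAm : ∀ p, MeasurableSet (A p) := by
    intro p
    apply MeasurableSet.inter
    · have : {a : Fin m → ℝ | ∀ j, |a j| ≤ 1} = ⋂ j, {a | |a j| ≤ 1} := by ext; simp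
      change MeasurableSet {a : Fin m → ℝ | ∀ j, |a j| ≤ 1}
      rw [this]
      exact MeasurableSet.iInter fun j =>
        measurableSet_le (measurable_pi_apply j).norm measurable_const
    · exact (faceC_lip p.1 (hs p.2)).continuous.measurable hE'
  have hcov : (Subtype.val '' E : Set (Eu (m+1))) ⊆
      ⋃ p : Fin (m+1) × Bool, faceC p.1 (if p.2 then 1 else -1) '' A p := by
    rintro θ hθ
    have hn : ‖θ‖ = 1 := by
      obtain ⟨t, -, rfl⟩ := hθ; simp
    obtain ⟨i, s, hs', a, ha, hf⟩ := exists_face θ hn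
    rw [Set.mem_iUnion]
    have e1 : ∀ b : Bool, s = (if b then (1:ℝ) else -1) →
        faceC i (if b then (1:ℝ) else -1) a = θ := by
      intro b hb; rw [← hb]; exact hf
    rcases hs' with h | h
    · refine ⟨(i, true), a, ⟨ha, ?_⟩, e1 true (by simpa using h)⟩
      exact (e1 true (by simpa using h)).symm ▸ hθ
    · refine ⟨(i, false), a, ⟨ha, ?_⟩, e1 false (by simpa using h)⟩
      exact (e1 false (by simpa using h)).symm ▸ hθ
  have hone : ∀ p, μH[(m:ℝ)] (faceC p.1 (if p.2 then 1 else -1) '' A p) ≤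
      ENNReal.ofReal (L * δ⁻¹) * (volume : Measure (Eu (m+1))).toSphere E := by
    intro p
    have h1 := ((faceC_lip p.1 (hs p.2)).lipschitzOnWith (s := A p)).hausdorffMeasure_image_le
      (d := m) (by positivity)
    have h2 : (μH[(m:ℝ)] : Measure (Fin m → ℝ)) = volume := by
      have := hausdorffMeasure_pi_real (ι := Fin m)
      simpa using this
    rw [h2] at h1
    have h3 := face_cone p.1 (hs p.2) (Subtype.val '' E) (A p) (hAm p) (fun a ha => ha)
    rw [Measure.toSphere_apply' _ hE]
    have h4 : ((2 * (m+1) : NNReal) : ENNReal) ^ (m:ℝ) = ENNReal.ofReal L := by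
      rw [ENNReal.rpow_natCast, hL, ENNReal.ofReal_pow (by positivity)]
      congr 1
      rw [← ENNReal.ofReal_coe_nnreal]; push_cast; rfl
    rw [h4] at h1
    refine h1.trans ?_
    have h5 : volume (A p) ≤ ENNReal.ofReal δ⁻¹ * volume (Set.Ioo (0:ℝ) 1 • (Subtype.val '' E : Set (Eu (m+1)))) := by
      calc volume (A p) = ENNReal.ofReal δ⁻¹ * (ENNReal.ofReal δ * volume (A p)) := by
            rw [← mul_assoc, ← ENNReal.ofReal_mul (by positivity), inv_mul_cancel₀ hδ0.ne']; simp
        _ ≤ _ := by gcongr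
    rw [ENNReal.ofReal_mul hL0.le, mul_assoc]
    gcongr
    refine h5.trans ?_
    gcongr
    have : (1:ENNReal) ≤ (Module.finrank ℝ (Eu (m+1)) : ENNReal) := by
      simp
    calc _ = 1 * volume (Set.Ioo (0:ℝ) 1 • (Subtype.val '' E : Set (Eu (m+1)))) := by rw [one_mul]
      _ ≤ _ := by gcongr
  calc _ ≤ μH[(m:ℝ)] (⋃ p : Fin (m+1) × Bool, faceC p.1 (if p.2 then 1 else -1) '' A p) := measure_mono hcov
    _ ≤ ∑ p : Fin (m+1) × Bool, μH[(m:ℝ)] (faceC p.1 (if p.2 then 1 else -1) '' A p) :=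
        measure_iUnion_fintype_le _ _
    _ ≤ ∑ p : Fin (m+1) × Bool, ENNReal.ofReal (L * δ⁻¹) * (volume : Measure (Eu (m+1))).toSphere E :=
        Finset.sum_le_sum fun p _ => hone p
    _ = _ := by
        rw [Finset.sum_const, Finset.card_univ, nsmul_eq_mul, ENNReal.ofReal_mul (p := 2 * ((m:ℝ)+1)) (by positivity),
          ← mul_assoc]
        congr 2
        simp only [Fintype.card_prod, Fintype.card_fin, Fintype.card_bool]
        rw [← ENNReal.ofReal_natCast]; push_cast; congr 1; ring

lemma measurable_scaleS {k : ℕ} (ρ : ℝ) :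
    Continuous (fun θ : sphere (0 : Eu k) 1 => ρ • (θ : Eu k)) := by fun_prop

open scoped Pointwise in
lemma hausdorff_restrict_le (m : ℕ) : ∃ c : ℝ, 0 < c ∧ ∀ ρ : ℝ, 0 < ρ →
    (μH[(m:ℝ)] : Measure (Eu (m+1))).restrict (sphere 0 ρ) ≤
      ENNReal.ofReal (c * ρ^m) • Measure.map (fun θ : sphere (0 : Eu (m+1)) 1 => ρ • (θ : Eu (m+1)))
        (volume : Measure (Eu (m+1))).toSphere := by
  obtain ⟨c, hc, h⟩ := hausdorff_sphere_le m
  refine ⟨c, hc, fun ρ hρ => ?_⟩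
  rw [Measure.le_iff]
  intro E hE
  have hE2 := (measurable_scaleS (k := m+1) ρ).measurable hE
  rw [Measure.restrict_apply hE, Measure.smul_apply, Measure.map_apply (measurable_scaleS ρ).measurable hE,
    smul_eq_mul]
  have e : E ∩ sphere 0 ρ = ρ • (Subtype.val '' ((fun θ : sphere (0 : Eu (m+1)) 1 => ρ • (θ : Eu (m+1))) ⁻¹' E)) := by
    ext x
    constructor
    · rintro ⟨hx, hxs⟩
      have hxn : ‖x‖ = ρ := by simpa using hxs
      have hxx : ρ • ρ⁻¹ • x = x := by rw [smul_smul, mul_inv_cancel₀ hρ.ne', one_smul]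
      refine ⟨ρ⁻¹ • x, ⟨⟨ρ⁻¹ • x, ?_⟩, ?_, rfl⟩, ?_⟩
      · simp [norm_smul, hxn, abs_of_pos hρ, hρ.ne']
      · simp only [Set.mem_preimage, hxx]; exact hx
      · exact hxx
    · rintro ⟨y, ⟨θ, hθ, rfl⟩, rfl⟩
      refine ⟨hθ, ?_⟩
      simp [norm_smul, abs_of_pos hρ]
  rw [e, Measure.hausdorffMeasure_smul₀ (by positivity) hρ.ne']
  have h2 := h _ hE2
  rw [ENNReal.ofReal_mul hc.le, mul_comm (ENNReal.ofReal c), mul_assoc]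
  have e2 : (‖ρ‖₊ ^ (m:ℝ)) • μH[(m:ℝ)] (Subtype.val '' ((fun θ : sphere (0 : Eu (m+1)) 1 => ρ • (θ : Eu (m+1))) ⁻¹' E))
     = ENNReal.ofReal (ρ^m) * μH[(m:ℝ)] (Subtype.val '' ((fun θ : sphere (0 : Eu (m+1)) 1 => ρ • (θ : Eu (m+1))) ⁻¹' E)) := by
    rw [ENNReal.smul_def, smul_eq_mul]
    congr 1
    rw [NNReal.rpow_natCast, ENNReal.coe_pow, ENNReal.ofReal_pow hρ.le]
    congr 1
    rw [← ENNReal.ofReal_coe_nnreal]; simp [abs_of_pos hρ]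
  rw [e2]
  gcongr

/-- The sphere integral of `f²` with respect to Hausdorff measure, bounded by surface measure. -/
lemma HInt_le (m : ℕ) : ∃ c : ℝ, 0 < c ∧ ∀ (f : Eu (m+1) → ℝ) (_ : Continuous f) (ρ : ℝ), 0 < ρ →
    HInt f 0 ρ ≤ c * ρ^m * ∫ θ : sphere (0 : Eu (m+1)) 1, f (ρ • (θ : Eu (m+1)))^2
      ∂(volume : Measure (Eu (m+1))).toSphere := by
  obtain ⟨c, hc, h⟩ := hausdorff_restrict_le m
  refine ⟨c, hc, fun f hf ρ hρ => ?_⟩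
  have hcont : Continuous (fun θ : sphere (0 : Eu (m+1)) 1 => f (ρ • (θ : Eu (m+1)))^2) := by fun_prop
  have hint : Integrable (fun θ : sphere (0 : Eu (m+1)) 1 => f (ρ • (θ : Eu (m+1)))^2)
      (volume : Measure (Eu (m+1))).toSphere := by
    apply hcont.integrable_of_hasCompactSupport
    exact HasCompactSupport.of_compactSpace _
  have hmap : Integrable (fun x => f x ^2) (Measure.map (fun θ : sphere (0 : Eu (m+1)) 1 => ρ • (θ : Eu (m+1)))
        (volume : Measure (Eu (m+1))).toSphere) := by
    rw [integrable_map_measure (by fun_prop) (measurable_scaleS ρ).measurable.aemeasurable]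
    exact hint
  unfold HInt
  have e : (((m+1 : ℕ) : ℝ) - 1) = m := by push_cast; ring
  rw [e]
  calc _ ≤ ∫ x, f x ^ 2 ∂(ENNReal.ofReal (c * ρ^m) • Measure.map (fun θ : sphere (0 : Eu (m+1)) 1 => ρ • (θ : Eu (m+1)))
        (volume : Measure (Eu (m+1))).toSphere) := by
        apply integral_mono_measure (h ρ hρ)
        · exact Eventually.of_forall fun x => sq_nonneg _
        · exact hmap.smul_measure ENNReal.ofReal_ne_top
    _ = _ := by
        rw [integral_smul_measure, integral_map (measurable_scaleS ρ).measurable.aemeasurable (by fun_prop),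
          ENNReal.toReal_ofReal (by positivity), smul_eq_mul]

end partd

section parte
variable {n : ℕ}

lemma hausdorff_sphere_pos (m : ℕ) {ρ : ℝ} (hρ : 0 < ρ) (x0 : Eu (m+1)) (hx0 : ‖x0‖ = ρ) {ε : ℝ}
    (hε : 0 < ε) : 0 < μH[(m:ℝ)] (ball x0 ε ∩ sphere (0 : Eu (m+1)) ρ) := by
  have hex : ∃ i, x0 i ≠ 0 := by
    by_contra h
    push Not at h
    have : x0 = 0 := by ext i; simpa using h i
    rw [this] at hx0; simp at hx0; exact hρ.ne hx0
  obtain ⟨i, hi⟩ := hex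
  have hnorm : ∀ (s : ℝ) (y : Fin m → ℝ), ‖faceZ i s y‖^2 = s^2 + ∑ j, y j^2 := by
    intro s y
    rw [EuclideanSpace.norm_sq_eq, Fin.sum_univ_succAbove _ i]
    simp
  set y0 : Fin m → ℝ := fun j => x0 (i.succAbove j) with hy0
  have hx0z : x0 = faceZ i (x0 i) y0 := by
    ext j
    rcases Fin.eq_self_or_eq_succAbove i j with h | ⟨j', h⟩
    · subst h; simp
    · subst h; simp [hy0]
  have hx0n : x0 i ^2 + ∑ j, y0 j^2 = ρ^2 := by
    rw [← hnorm, ← hx0z, hx0]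
  set σ : ℝ := x0 i / |x0 i| with hσ
  have hσ2 : σ^2 = 1 := by rw [hσ, div_pow, sq_abs]; field_simp
  let g : (Fin m → ℝ) → Eu (m+1) := fun y => faceZ i (σ * Real.sqrt (ρ^2 - ∑ j, y j^2)) y
  have hg : Continuous g := by
    unfold g faceZ
    apply (PiLp.continuous_toLp 2 _).comp
    exact Continuous.finInsertNth i (by fun_prop) (by fun_prop)
  have hg0 : g y0 = x0 := by
    have e : ρ^2 - ∑ j, y0 j^2 = x0 i^2 := by linarith
    have : σ * Real.sqrt (ρ^2 - ∑ j, y0 j^2) = x0 i := by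
      rw [e, Real.sqrt_sq_eq_abs, hσ]; field_simp
    change faceZ i (σ * Real.sqrt (ρ^2 - ∑ j, y0 j^2)) y0 = x0
    rw [this, ← hx0z]
  set V : Set (Fin m → ℝ) := g ⁻¹' (ball x0 ε) ∩ {y | ∑ j, y j^2 < ρ^2} with hV
  have hVo : IsOpen V := (isOpen_ball.preimage hg).inter (isOpen_lt (by fun_prop) continuous_const)
  have hVne : V.Nonempty := ⟨y0, by simp [hg0, hε], by
    have : 0 < x0 i ^2 := by positivity
    simp only [Set.mem_setOf_eq]; linarith⟩
  let P : Eu (m+1) → (Fin m → ℝ) := fun x j => x (i.succAbove j)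
  have hP : LipschitzWith 1 P := by
    apply LipschitzWith.of_dist_le_mul
    intro x y
    simp only [NNReal.coe_one, one_mul]
    rw [dist_pi_le_iff dist_nonneg]
    intro j
    have := eu_coord_le (x - y) (i.succAbove j)
    rw [Real.dist_eq, dist_eq_norm]
    exact this
  have hsub : V ⊆ P '' (ball x0 ε ∩ sphere (0 : Eu (m+1)) ρ) := by
    rintro y ⟨hy1, hy2⟩
    simp only [Set.mem_setOf_eq] at hy2
    refine ⟨g y, ⟨hy1, ?_⟩, ?_⟩
    · rw [mem_sphere_zero_iff_norm]
      have : ‖g y‖^2 = ρ^2 := by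
        change ‖faceZ i (σ * Real.sqrt (ρ^2 - ∑ j, y j^2)) y‖^2 = ρ^2
        rw [hnorm, mul_pow, hσ2, Real.sq_sqrt (by linarith)]; ring
      exact (pow_left_inj₀ (norm_nonneg _) hρ.le two_ne_zero).1 this
    · ext j; simp [P, g]
  have h1 := (hP.lipschitzOnWith (s := ball x0 ε ∩ sphere (0 : Eu (m+1)) ρ)).hausdorffMeasure_image_le
      (d := m) (by positivity)
  have h2 : (μH[(m:ℝ)] : Measure (Fin m → ℝ)) = volume := by
      have := hausdorffMeasure_pi_real (ι := Fin m)
      simpa using this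
  rw [h2] at h1
  simp only [ENNReal.coe_one, ENNReal.one_rpow, one_mul] at h1
  exact (hVo.measure_pos volume hVne).trans_le ((measure_mono hsub).trans h1)

lemma HInt_zero (m : ℕ) {f : Eu (m+1) → ℝ} (hf : Continuous f) {ρ : ℝ} (hρ : 0 < ρ)
    (h0 : HInt f 0 ρ = 0) (x : Eu (m+1)) (hx : ‖x‖ = ρ) : f x = 0 := by
  obtain ⟨c, hc, h⟩ := hausdorff_restrict_le m
  have h := h ρ hρ
  have hmap : Integrable (fun x => f x ^2) (Measure.map (fun θ : sphere (0 : Eu (m+1)) 1 => ρ • (θ : Eu (m+1)))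
        (volume : Measure (Eu (m+1))).toSphere) := by
    rw [integrable_map_measure (by fun_prop) (measurable_scaleS ρ).measurable.aemeasurable]
    have hcont : Continuous (fun θ : sphere (0 : Eu (m+1)) 1 => f (ρ • (θ : Eu (m+1)))^2) := by fun_prop
    exact hcont.integrable_of_hasCompactSupport (HasCompactSupport.of_compactSpace _)
  have hint : Integrable (fun x => f x^2) ((μH[(m:ℝ)] : Measure (Eu (m+1))).restrict (sphere 0 ρ)) :=
    (hmap.smul_measure ENNReal.ofReal_ne_top).mono_measure h
  unfold HInt at h0
  have e : (((m+1 : ℕ) : ℝ) - 1) = m := by push_cast; ring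
  rw [e, integral_eq_zero_iff_of_nonneg (fun x => sq_nonneg _) hint] at h0
  by_contra hne
  obtain ⟨ε, hε, hb⟩ := Metric.eventually_nhds_iff_ball.1 (hf.continuousAt.eventually_ne hne)
  have hpos := hausdorff_sphere_pos m hρ x hx hε
  have hz : (μH[(m:ℝ)] : Measure (Eu (m+1))).restrict (sphere 0 ρ) (ball x ε) = 0 := by
    refine measure_mono_null ?_ (ae_iff.1 h0)
    intro y hy
    have := hb y hy
    simp [this]
  rw [Measure.restrict_apply measurableSet_ball] at hz
  exact hpos.ne' hz

lemma max_principle_le (hn : 0 < n) {f : Eu n → ℝ} (hf : ContDiff ℝ 2 f) {ρ : ℝ} (hρ : 0 < ρ)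
    (hl : ∀ y ∈ ball (0 : Eu n) ρ, lapl f y = 0) (h0 : ∀ x : Eu n, ‖x‖ = ρ → f x = 0)
    (x : Eu n) (hx : ‖x‖ ≤ ρ) : f x ≤ 0 := by
  by_contra hpos
  push Not at hpos
  obtain ⟨x1, hx1, hmax⟩ := (isCompact_closedBall (0 : Eu n) ρ).exists_isMaxOn ⟨x, by simpa using hx⟩
    hf.continuous.continuousOn
  have hx1p : 0 < f x1 := hpos.trans_le (hmax (by simpa using hx))
  have hx1n : ‖x1‖ < ρ := by
    refine lt_of_le_of_ne (by simpa using hx1) (fun h => ?_)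
    rw [h0 x1 h] at hx1p; exact lt_irrefl _ hx1p
  set d := ρ - ‖x1‖ with hd
  have hd0 : 0 < d := by linarith
  have hsub : ∀ y : Eu n, ‖y‖ ≤ 1 → x1 + d • y ∈ closedBall (0 : Eu n) ρ := by
    intro y hy
    rw [mem_closedBall_zero_iff]
    calc _ ≤ ‖x1‖ + ‖d • y‖ := norm_add_le _ _
      _ ≤ ‖x1‖ + d * 1 := by rw [norm_smul, Real.norm_of_nonneg hd0.le]; gcongr
      _ = ρ := by rw [hd]; ring
  have hm := mean_le_global hf x1 hd0.le (by
    intro y hy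
    refine (hl y ?_).ge
    rw [mem_ball_zero_iff]
    rw [mem_ball, dist_eq_norm] at hy
    calc ‖y‖ = ‖x1 + (y - x1)‖ := by congr 1; abel
      _ ≤ ‖x1‖ + ‖y - x1‖ := norm_add_le _ _
      _ < ‖x1‖ + d := by linarith
      _ = ρ := by rw [hd]; ring)
  have hc : Continuous (fun y : Eu n => (f x1 - f (x1 + d • y)) * kR y) := by
    have := hf.continuous; have := continuous_kR (n := n); fun_prop
  have hc2 : Continuous (fun y : Eu n => f (x1 + d • y) * kR y) := by
    have := hf.continuous; have := continuous_kR (n := n); fun_prop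
  have hnn : ∀ y : Eu n, 0 ≤ (f x1 - f (x1 + d • y)) * kR y := by
    intro y
    by_cases hy : ‖y‖ ≤ 1
    · exact mul_nonneg (sub_nonneg.2 (hmax (hsub y hy))) (kR_nonneg y)
    · rw [kR_zero (by linarith)]; simp
  have hi2 : Integrable (fun y : Eu n => f (x1 + d • y) * kR y) :=
    hc2.integrable_of_hasCompactSupport (hcs_kR.mul_left)
  have hi : Integrable (fun y : Eu n => (f x1 - f (x1 + d • y)) * kR y) :=
    hc.integrable_of_hasCompactSupport (hcs_kR.mul_left)
  have hint0 : ∫ y : Eu n, (f x1 - f (x1 + d • y)) * kR y = 0 := by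
    apply le_antisymm _ (integral_nonneg hnn)
    have : ∫ y : Eu n, (f x1 - f (x1 + d • y)) * kR y = f x1 * cR n - ∫ y : Eu n, f (x1 + d • y) * kR y := by
      unfold cR
      rw [← integral_const_mul, ← integral_sub (integrable_kR.const_mul _) hi2]
      congr 1; ext y; ring
    rw [this]; linarith
  have hz : ∀ y : Eu n, (f x1 - f (x1 + d • y)) * kR y = 0 := by
    have h1 := (integral_eq_zero_iff_of_nonneg hnn hi).1 hint0
    have h2 := hc.ae_eq_iff_eq volume (continuous_const (y := (0:ℝ))) |>.1 h1
    exact fun y => congrFun h2 y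
  -- unit vector
  obtain ⟨e, he, hxe⟩ : ∃ e : Eu n, ‖e‖ = 1 ∧ ‖x1 + d • e‖ = ρ := by
    by_cases hx10 : x1 = 0
    · refine ⟨EuclideanSpace.single ⟨0, hn⟩ 1, by simp, ?_⟩
      rw [hx10, zero_add, norm_smul]
      simp [hd, hx10, abs_of_pos hρ]
    · have hx1' : 0 < ‖x1‖ := norm_pos_iff.2 hx10
      refine ⟨‖x1‖⁻¹ • x1, by rw [norm_smul, norm_inv, norm_norm, inv_mul_cancel₀ hx1'.ne'], ?_⟩
      have : x1 + d • ‖x1‖⁻¹ • x1 = (ρ * ‖x1‖⁻¹) • x1 := by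
        rw [smul_smul]
        nth_rewrite 1 [← one_smul ℝ x1]
        rw [← add_smul]; congr 1; rw [hd]; field_simp; ring
      rw [this, norm_smul, norm_mul, norm_inv, norm_norm, mul_assoc, inv_mul_cancel₀ hx1'.ne', mul_one,
        Real.norm_of_nonneg hρ.le]
  have hseg : ∀ t ∈ Set.Ico (0:ℝ) 1, f (x1 + d • t • e) = f x1 := by
    intro t ht
    have hk : 0 < kR (t • e) := by
      unfold kR
      have : ‖t • e‖ < 1 := by rw [norm_smul, he, mul_one, Real.norm_of_nonneg ht.1]; exact ht.2
      have : 0 < max (1 - ‖t • e‖^2) 0 := lt_max_of_lt_left (by nlinarith [norm_nonneg (t • e)])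
      positivity
    have := (mul_eq_zero.1 (hz (t • e))).resolve_right hk.ne'
    linarith
  have hcont : Continuous (fun t : ℝ => f (x1 + d • t • e)) := by
    have := hf.continuous; fun_prop
  have hlim : f (x1 + d • (1:ℝ) • e) = f x1 := by
    have h1 : Tendsto (fun t : ℝ => f (x1 + d • t • e)) (nhdsWithin 1 (Set.Iio 1)) (nhds (f (x1 + d • (1:ℝ) • e))) :=
      hcont.continuousAt.tendsto.mono_left nhdsWithin_le_nhds
    have h2 : Tendsto (fun t : ℝ => f (x1 + d • t • e)) (nhdsWithin 1 (Set.Iio 1)) (nhds (f x1)) := by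
      apply tendsto_const_nhds.congr'
      have : Set.Ico (0:ℝ) 1 ∈ nhdsWithin (1:ℝ) (Set.Iio 1) := Ico_mem_nhdsLT zero_lt_one
      filter_upwards [this] with t ht
      exact (hseg t ht).symm
    exact tendsto_nhds_unique h1 h2
  rw [one_smul, h0 _ hxe] at hlim
  linarith

lemma lapl_neg (f : Eu n → ℝ) (x : Eu n) : lapl (fun y => - f y) x = - lapl f x := by
  unfold lapl
  simp only [fderiv_fun_neg, ContinuousLinearMap.neg_apply, Finset.sum_neg_distrib]

lemma max_principle (hn : 0 < n) {f : Eu n → ℝ} (hf : ContDiff ℝ 2 f) {ρ : ℝ} (hρ : 0 < ρ)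
    (hl : ∀ y ∈ ball (0 : Eu n) ρ, lapl f y = 0) (h0 : ∀ x : Eu n, ‖x‖ = ρ → f x = 0)
    (x : Eu n) (hx : ‖x‖ ≤ ρ) : f x = 0 := by
  apply le_antisymm (max_principle_le hn hf hρ hl h0 x hx)
  have := max_principle_le hn (f := fun y => - f y) hf.neg hρ
    (fun y hy => by rw [lapl_neg, hl y hy, neg_zero]) (fun x hx => by rw [h0 x hx, neg_zero]) x hx
  linarith

lemma norm_gradient_sq (f : Eu n → ℝ) (x : Eu n) : ‖gradient f x‖^2 = ∑ i, pd i f x^2 := by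
  rw [EuclideanSpace.norm_sq_eq]
  apply Finset.sum_congr rfl
  intro i _
  have : (gradient f x) i = pd i f x := by
    have h : inner ℝ (gradient f x) (EuclideanSpace.single i (1:ℝ)) = fderiv ℝ f x (EuclideanSpace.single i 1) := by
      simp [gradient, InnerProductSpace.toDual_symm_apply]
    rw [EuclideanSpace.inner_single_right] at h
    simpa [pd] using h
  rw [this, Real.norm_eq_abs, sq_abs]

lemma freq_bound (m : ℕ) {f : Eu (m+1) → ℝ} (hf : ContDiff ℝ 2 f) {ρ N₀ : ℝ} (hρ : 0 < ρ)
    (hl : ∀ y ∈ ball (0 : Eu (m+1)) ρ, lapl f y = 0) (hN : freqN f 0 ρ ≤ N₀) :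
    ρ * DInt f 0 ρ ≤ N₀ * HInt f 0 ρ := by
  have hH : 0 ≤ HInt f 0 ρ := integral_nonneg fun x => sq_nonneg _
  rcases hH.eq_or_lt with h | h
  · have hz := max_principle (Nat.succ_pos m) hf hρ hl (fun x hx => HInt_zero m hf.continuous hρ h.symm x hx)
    have : DInt f 0 ρ = 0 := by
      unfold DInt
      rw [setIntegral_congr_fun (g := fun _ => 0) measurableSet_ball, integral_zero]
      intro x hx
      have : f =ᶠ[nhds x] fun _ => 0 := by
        filter_upwards [isOpen_ball.mem_nhds hx] with y hy
        exact hz y (by simpa using (mem_ball_zero_iff.1 hy).le)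
      simp only [gradient, this.fderiv_eq]
      simp
    rw [this, ← h]; simp
  · unfold freqN at hN
    rwa [div_le_iff₀ h] at hN

end parte

section partf
lemma lintegral_polar (m : ℕ) (g : Eu (m+1) → ENNReal) (hg : Measurable g) :
    ∫⁻ y, g y = ∫⁻ s in Set.Ioi (0:ℝ), ENNReal.ofReal (s^m) *
      ∫⁻ θ : sphere (0 : Eu (m+1)) 1, g (s • (θ : Eu (m+1))) ∂(volume : Measure (Eu (m+1))).toSphere := by
  have hd : Module.finrank ℝ (Eu (m+1)) - 1 = m := by simp
  have hmp := (volume : Measure (Eu (m+1))).measurePreserving_homeomorphUnitSphereProd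
  rw [hd] at hmp
  let G : sphere (0 : Eu (m+1)) 1 × Set.Ioi (0:ℝ) → ENNReal := fun p => g ((p.2 : ℝ) • (p.1 : Eu (m+1)))
  have hGm : Measurable G := hg.comp (by fun_prop)
  calc ∫⁻ y, g y = ∫⁻ x : ({(0 : Eu (m+1))}ᶜ : Set (Eu (m+1))), g x.1 ∂(volume.comap (Subtype.val)) := by
        rw [lintegral_subtype_comap (measurableSet_singleton _).compl, restrict_compl_singleton]
    _ = ∫⁻ p, G p ∂((volume : Measure (Eu (m+1))).toSphere.prod (.volumeIoiPow m)) := by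
        rw [← hmp.lintegral_comp hGm]
        apply lintegral_congr
        intro x
        simp only [G]
        congr 1
        have hx : ‖x.1‖ ≠ 0 := norm_ne_zero_iff.2 x.2
        simp [smul_smul, hx]
    _ = ∫⁻ s : Set.Ioi (0:ℝ), ∫⁻ θ, G (θ, s) ∂(volume : Measure (Eu (m+1))).toSphere ∂(.volumeIoiPow m) := by
        rw [lintegral_prod_symm' _ hGm]
    _ = _ := by
        have hin : Measurable (fun s : Set.Ioi (0:ℝ) => ∫⁻ θ, G (θ, s) ∂(volume : Measure (Eu (m+1))).toSphere) :=
          Measurable.lintegral_prod_left' hGm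
        rw [Measure.volumeIoiPow, lintegral_withDensity_eq_lintegral_mul _ (by fun_prop) hin]
        simp only [Pi.mul_apply, G]
        rw [lintegral_subtype_comap measurableSet_Ioi (fun s : ℝ => ENNReal.ofReal (s^m) *
          ∫⁻ θ : sphere (0 : Eu (m+1)) 1, g (s • (θ : Eu (m+1))) ∂(volume : Measure (Eu (m+1))).toSphere)]

/-- radial profile of `kR` -/
noncomputable def kr (s : ℝ) : ℝ := 6 * max (1 - s^2) 0 ^ 2

lemma kr_nonneg (s : ℝ) : 0 ≤ kr s := by unfold kr; positivity
lemma continuous_kr : Continuous kr := by unfold kr; fun_prop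

lemma layer (r : ℝ) (hr : 0 ≤ r) :
    ∫⁻ s in Set.Ioi r, ENNReal.ofReal (s * kr s) = ENNReal.ofReal (max (1 - r^2) 0 ^ 3) := by
  have hd : ∀ s ∈ Set.Ici r, HasDerivAt (fun s : ℝ => - (max (1 - s^2) 0 ^ 3)) (s * kr s) s := by
    intro s _
    have h1 : HasDerivAt (fun s : ℝ => 1 - s^2) (-(2*s)) s := by
      have := ((hasDerivAt_pow 2 s).const_sub 1)
      simpa using this
    have h2 := ((hasDerivAt_maxpow 1 (1 - s^2)).comp s h1).neg
    have e : -(((1+2:ℕ):ℝ) * max (1 - s^2) 0 ^ (1+1) * (-(2*s))) = s * kr s := by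
      unfold kr; push_cast; ring
    rw [e] at h2; exact h2
  have hnn : ∀ s ∈ Set.Ioi r, 0 ≤ s * kr s := fun s hs => mul_nonneg (hr.trans (le_of_lt hs)) (kr_nonneg s)
  have hlim : Tendsto (fun s : ℝ => - (max (1 - s^2) 0 ^ 3)) atTop (nhds 0) := by
    apply tendsto_const_nhds.congr'
    filter_upwards [eventually_ge_atTop 1] with s hs
    rw [max_eq_right (by nlinarith)]; simp
  have hi := integrableOn_Ioi_deriv_of_nonneg' hd hnn hlim
  have hv := integral_Ioi_of_hasDerivAt_of_nonneg' hd hnn hlim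
  rw [← ofReal_integral_eq_lintegral_ofReal hi ((ae_restrict_iff' measurableSet_Ioi).2 (Eventually.of_forall hnn)), hv]
  congr 1; ring

lemma FF_polar (m : ℕ) {f : Eu (m+1) → ℝ} (hf : Continuous f) (t : ℝ) :
    ENNReal.ofReal (FF f 0 t) = ∫⁻ s in Set.Ioi (0:ℝ), ENNReal.ofReal (s^m * kr s *
      ∫ θ : sphere (0 : Eu (m+1)) 1, f ((t*s) • (θ : Eu (m+1)))^2 ∂(volume : Measure (Eu (m+1))).toSphere) := by
  have hk := continuous_kR (n := m+1)
  have hc : Continuous (fun y : Eu (m+1) => f ((0 : Eu (m+1)) + t • y)^2 * kR y) := by fun_prop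
  unfold FF
  rw [ofReal_integral_eq_lintegral_ofReal (hc.integrable_of_hasCompactSupport hcs_kR.mul_left)
    (Eventually.of_forall fun y => mul_nonneg (sq_nonneg _) (kR_nonneg y)),
    lintegral_polar m _ (by fun_prop)]
  apply setLIntegral_congr_fun measurableSet_Ioi
  intro s hs
  have hs0 : (0:ℝ) < s := hs
  have hc2 : Continuous (fun θ : sphere (0 : Eu (m+1)) 1 => f ((t*s) • (θ : Eu (m+1)))^2) := by fun_prop
  have e : ∀ θ : sphere (0 : Eu (m+1)) 1, ENNReal.ofReal (f ((0 : Eu (m+1)) + t • s • (θ : Eu (m+1)))^2 * kR (s • (θ : Eu (m+1))))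
      = ENNReal.ofReal (kr s) * ENNReal.ofReal (f ((t*s) • (θ : Eu (m+1)))^2) := by
    intro θ
    rw [← ENNReal.ofReal_mul (kr_nonneg s), zero_add, smul_smul]
    congr 1
    have : kR (s • (θ : Eu (m+1))) = kr s := by
      unfold kR kr; rw [norm_smul]; simp
    rw [this]; ring
  simp only [e]
  rw [lintegral_const_mul _ (by fun_prop),
    ← ofReal_integral_eq_lintegral_ofReal (hc2.integrable_of_hasCompactSupport (HasCompactSupport.of_compactSpace _))
    (Eventually.of_forall fun y => (sq_nonneg _)), ← ENNReal.ofReal_mul (kr_nonneg s), ← ENNReal.ofReal_mul (by positivity)]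
  congr 1; ring

open scoped Pointwise in
lemma DInt_scale {k : ℕ} (f : Eu k → ℝ) {t s : ℝ} (ht : 0 < t) :
    ∫ y in ball (0 : Eu k) s, t^2 * ∑ i, pd i f ((0:Eu k) + t • y)^2 = t^2 * (t^k)⁻¹ * DInt f 0 (t*s) := by
  rw [integral_const_mul]
  simp only [zero_add]
  rw [Measure.setIntegral_comp_smul_of_pos volume (fun y => ∑ i, pd i f y^2) _ ht, _root_.smul_ball ht.ne']
  unfold DInt
  simp only [norm_gradient_sq, smul_zero, Real.norm_of_nonneg ht.le, finrank_euclideanSpace, Fintype.card_fin, smul_eq_mul]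
  ring

lemma QQ_layer (m : ℕ) {f : Eu (m+1) → ℝ} (hf : ContDiff ℝ 2 f) {t : ℝ} (ht : 0 < t) :
    ENNReal.ofReal (QQ f 0 t) = ∫⁻ s in Set.Ioi (0:ℝ), ENNReal.ofReal (s * kr s * (t^2 * (t^(m+1))⁻¹ * DInt f 0 (t*s))) := by
  have hk := continuous_kP (n := m+1)
  have hpd : ∀ i, Continuous (pd i f) := fun i => continuous_pd (hf.of_le (by norm_num)) i
  set G : Eu (m+1) → ℝ := fun y => t^2 * ∑ i, pd i f ((0:Eu (m+1)) + t • y)^2 with hG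
  have hGc : Continuous G := by
    apply continuous_const.mul
    exact continuous_finsetSum _ fun i _ => ((hpd i).comp (by fun_prop)).pow 2
  have hG0 : ∀ y, 0 ≤ G y := fun y => by positivity
  have hc : Continuous (fun y : Eu (m+1) => G y * kP y) := hGc.mul hk
  have hkr := continuous_kr
  unfold QQ
  change ENNReal.ofReal (∫ y, G y * kP y) = _
  rw [ofReal_integral_eq_lintegral_ofReal (hc.integrable_of_hasCompactSupport hcs_kP.mul_left)
    (Eventually.of_forall fun y => mul_nonneg (hG0 y) (kP_nonneg y))]
  have e1 : ∀ y : Eu (m+1), ENNReal.ofReal (G y * kP y) = ∫⁻ s in Set.Ioi (0:ℝ),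
      Set.indicator {p : Eu (m+1) × ℝ | ‖p.1‖ < p.2} (fun p => ENNReal.ofReal (G p.1) * ENNReal.ofReal (p.2 * kr p.2)) (y, s) := by
    intro y
    have h1 := layer ‖y‖ (norm_nonneg y)
    rw [ENNReal.ofReal_mul (hG0 y)]
    unfold kP
    rw [← h1, ← lintegral_const_mul _ (by fun_prop), ← lintegral_indicator measurableSet_Ioi,
      ← lintegral_indicator measurableSet_Ioi]
    congr 1; ext s
    by_cases hs : ‖y‖ < s
    · have : 0 < s := (norm_nonneg y).trans_lt hs
      simp [Set.indicator, hs, this]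
    · simp [Set.indicator, hs]
  simp_rw [e1]
  have hmeas : Measurable (Set.indicator {p : Eu (m+1) × ℝ | ‖p.1‖ < p.2} (fun p => ENNReal.ofReal (G p.1) * ENNReal.ofReal (p.2 * kr p.2))) := by
    apply Measurable.indicator
    · fun_prop
    · exact measurableSet_lt (by fun_prop) (by fun_prop)
  rw [lintegral_lintegral_swap (f := fun (y : Eu (m+1)) (s : ℝ) => Set.indicator {p : Eu (m+1) × ℝ | ‖p.1‖ < p.2}
    (fun p => ENNReal.ofReal (G p.1) * ENNReal.ofReal (p.2 * kr p.2)) (y, s)) (hmeas.aemeasurable)]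
  apply setLIntegral_congr_fun measurableSet_Ioi
  intro s hs
  have hs0 : (0:ℝ) < s := hs
  have e2 : ∀ y : Eu (m+1), Set.indicator {p : Eu (m+1) × ℝ | ‖p.1‖ < p.2} (fun p => ENNReal.ofReal (G p.1) * ENNReal.ofReal (p.2 * kr p.2)) (y, s)
      = ENNReal.ofReal (s * kr s) * Set.indicator (ball (0 : Eu (m+1)) s) (fun y => ENNReal.ofReal (G y)) y := by
    intro y
    by_cases hy : ‖y‖ < s
    · simp [Set.indicator, hy, mul_comm]
    · simp [Set.indicator, hy]
  simp_rw [e2]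
  rw [lintegral_const_mul _ (by apply Measurable.indicator (by fun_prop) measurableSet_ball), lintegral_indicator measurableSet_ball,
    ← ofReal_integral_eq_lintegral_ofReal, ← ENNReal.ofReal_mul (mul_nonneg hs0.le (kr_nonneg s)), DInt_scale f ht]
  · exact (hGc.continuousOn.integrableOn_compact (isCompact_closedBall (0 : Eu (m+1)) s)).mono_set ball_subset_closedBall
  · exact Eventually.of_forall hG0

lemma QQ_le_FF (m : ℕ) : ∃ c : ℝ, 0 < c ∧ ∀ (f : Eu (m+1) → ℝ) (_ : ContDiff ℝ 2 f) (R N₀ : ℝ) (_ : 0 < N₀)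
    (_ : ∀ ρ ∈ Set.Ioo 0 R, ρ * DInt f 0 ρ ≤ N₀ * HInt f 0 ρ) (t : ℝ) (_ : t ∈ Set.Ioo 0 R),
    QQ f 0 t ≤ N₀ * c * FF f 0 t := by
  obtain ⟨c, hc, hH⟩ := HInt_le m
  refine ⟨c, hc, fun f hf R N₀ hN h t ht => ?_⟩
  have hFF := FF_nonneg f 0 t
  rw [← ENNReal.ofReal_le_ofReal_iff (by positivity), ENNReal.ofReal_mul (by positivity), QQ_layer m hf ht.1, FF_polar m hf.continuous]
  rw [← lintegral_const_mul' _ _ ENNReal.ofReal_ne_top]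
  apply setLIntegral_mono' measurableSet_Ioi
  intro s hs
  have hs0 : (0:ℝ) < s := hs
  rw [← ENNReal.ofReal_mul (by positivity)]
  apply ENNReal.ofReal_le_ofReal
  rcases le_or_gt 1 s with h1 | h1
  · have : kr s = 0 := by unfold kr; rw [max_eq_right (by nlinarith)]; simp
    rw [this]; simp
  · have ht0 := ht.1
    have hts : t * s ∈ Set.Ioo 0 R := ⟨by positivity, by nlinarith [ht.2]⟩
    have h2 := h _ hts
    have h3 := hH f hf.continuous _ hts.1
    set I := ∫ θ : sphere (0 : Eu (m+1)) 1, f ((t*s) • (θ : Eu (m+1)))^2 ∂(volume : Measure (Eu (m+1))).toSphere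
    have h4 : t * s * DInt f 0 (t*s) ≤ N₀ * (c * (t*s)^m * I) := h2.trans (by gcongr)
    calc s * kr s * (t^2 * (t^(m+1))⁻¹ * DInt f 0 (t*s)) = kr s * (t * (t^(m+1))⁻¹) * (t * s * DInt f 0 (t*s)) := by ring
      _ ≤ kr s * (t * (t^(m+1))⁻¹) * (N₀ * (c * (t*s)^m * I)) := by
          apply mul_le_mul_of_nonneg_left h4
          have := kr_nonneg s
          positivity
      _ = _ := by rw [mul_pow, pow_succ]; field_simp

end partf

section partg
variable {n : ℕ}

lemma FF_growth {f : Eu n → ℝ} (hf : ContDiff ℝ 2 f) {R K : ℝ}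
    (hl : ∀ y ∈ ball (0 : Eu n) R, lapl f y = 0)
    (hQ : ∀ t ∈ Set.Ioo 0 R, QQ f 0 t ≤ K * FF f 0 t) {a b : ℝ} (ha : 0 < a) (hab : a ≤ b) (hb : b < R) :
    FF f 0 b ≤ (b/a)^(2*K) * FF f 0 a := by
  have hd : ∀ t ∈ Set.Ioo 0 R, HasDerivAt (fun t : ℝ => FF f 0 t * t^(-(2*K)))
      (2/t * QQ f 0 t * t^(-(2*K)) + FF f 0 t * (-(2*K) * t^(-(2*K)-1))) t := by
    intro t ht
    exact (FF_deriv hf hl ht).mul (Real.hasDerivAt_rpow_const (Or.inl ht.1.ne'))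
  have hanti : AntitoneOn (fun t : ℝ => FF f 0 t * t^(-(2*K))) (Set.Ioo 0 R) := by
    apply antitoneOn_of_deriv_nonpos (convex_Ioo 0 R)
    · exact fun t ht => (hd t ht).continuousAt.continuousWithinAt
    · rw [interior_Ioo]; exact fun t ht => (hd t ht).differentiableAt.differentiableWithinAt
    · rw [interior_Ioo]; intro t ht
      rw [(hd t ht).deriv, Real.rpow_sub_one ht.1.ne']
      have h1 := hQ t ht
      have h2 : 0 < t^(-(2*K)) := Real.rpow_pos_of_pos ht.1 _
      have ht0 := ht.1
      have : 2/t * QQ f 0 t * t^(-(2*K)) + FF f 0 t * (-(2*K) * (t^(-(2*K))/t))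
        = (2/t * t^(-(2*K))) * (QQ f 0 t - K * FF f 0 t) := by field_simp; ring
      rw [this]
      exact mul_nonpos_of_nonneg_of_nonpos (by positivity) (by linarith)
  have h := hanti ⟨ha, hab.trans_lt hb⟩ ⟨ha.trans_le hab, hb⟩ hab
  simp only at h
  have hb0 : 0 < b := ha.trans_le hab
  rw [Real.rpow_neg hb0.le, Real.rpow_neg ha.le] at h
  rw [Real.div_rpow hb0.le ha.le]
  have hB := Real.rpow_pos_of_pos hb0 (2*K)
  have hA := Real.rpow_pos_of_pos ha (2*K)
  rw [← div_eq_mul_inv, ← div_eq_mul_inv, div_le_div_iff₀ hB hA] at h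
  rw [div_mul_eq_mul_div, le_div_iff₀ hA]
  linarith

lemma FF_cov (f : Eu n → ℝ) (x : Eu n) {t : ℝ} (ht : 0 < t) :
    FF f x t = (t^n)⁻¹ * ∫ z, f z^2 * kR (t⁻¹ • (z - x)) := by
  unfold FF
  have h1 : ∫ z, f z^2 * kR (t⁻¹ • (z - x)) = ∫ z, f (x + z)^2 * kR (t⁻¹ • z) := by
    rw [← integral_add_left_eq_self _ x]
    simp
  have h2 := Measure.integral_comp_smul (volume : Measure (Eu n)) (fun z => f (x + z)^2 * kR (t⁻¹ • z)) t
  have e : ∀ y : Eu n, t⁻¹ • t • y = y := fun y => by rw [smul_smul, inv_mul_cancel₀ ht.ne', one_smul]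
  simp only [e] at h2
  rw [h2, h1, abs_of_pos (by positivity)]
  simp

lemma intOn_sq {f : Eu n → ℝ} (hf : Continuous f) (x : Eu n) (r : ℝ) :
    IntegrableOn (fun z => f z^2) (ball x r) :=
  ((hf.pow 2).continuousOn.integrableOn_compact (isCompact_closedBall x r)).mono_set ball_subset_closedBall

lemma hcs_shift {x : Eu n} {t : ℝ} (ht : 0 < t) :
    HasCompactSupport (fun z : Eu n => kR (t⁻¹ • (z - x))) := by
  apply HasCompactSupport.intro (isCompact_closedBall x t)
  intro z hz
  apply kR_zero
  rw [mem_closedBall, dist_eq_norm, not_le] at hz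
  rw [norm_smul, norm_inv, Real.norm_of_nonneg ht.le, ← div_eq_inv_mul, le_div_iff₀ ht]
  linarith

lemma FF_int {f : Eu n → ℝ} (hf : Continuous f) (x : Eu n) {t : ℝ} (ht : 0 < t) :
    Integrable (fun z => f z^2 * kR (t⁻¹ • (z - x))) := by
  have hk := continuous_kR (n := n)
  have : Continuous (fun z => f z^2 * kR (t⁻¹ • (z - x))) := by fun_prop
  exact this.integrable_of_hasCompactSupport (hcs_shift ht).mul_left

lemma FF_le_ball {f : Eu n → ℝ} (hf : Continuous f) (x : Eu n) {t : ℝ} (ht : 0 < t) :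
    FF f x t ≤ 6 * (t^n)⁻¹ * ∫ z in ball x t, f z^2 := by
  rw [FF_cov f x ht, mul_comm (6:ℝ), mul_assoc]
  apply mul_le_mul_of_nonneg_left _ (by positivity)
  rw [← integral_const_mul, ← integral_indicator measurableSet_ball]
  apply integral_mono (FF_int hf x ht)
  · exact IntegrableOn.integrable_indicator ((intOn_sq hf x t).const_mul 6) measurableSet_ball
  · intro z
    by_cases hz : z ∈ ball x t
    · rw [Set.indicator_of_mem hz]
      have := kR_le (t⁻¹ • (z - x))
      nlinarith [sq_nonneg (f z)]
    · rw [Set.indicator_of_notMem hz]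
      simp only
      rw [kR_zero, mul_zero]
      rw [mem_ball, dist_eq_norm, not_lt] at hz
      rw [norm_smul, norm_inv, Real.norm_of_nonneg ht.le, ← div_eq_inv_mul, le_div_iff₀ ht]
      linarith

lemma ball_le_FF {f : Eu n → ℝ} (hf : Continuous f) (x : Eu n) {t ρ κ : ℝ} (ht : 0 < t)
    (hκ : ∀ y : Eu n, ‖y‖ ≤ ρ/t → κ ≤ kR y) :
    κ * ∫ z in ball x ρ, f z^2 ≤ t^n * FF f x t := by
  rw [FF_cov f x ht, ← mul_assoc, mul_inv_cancel₀ (by positivity), one_mul,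
    ← integral_const_mul, ← integral_indicator measurableSet_ball]
  apply integral_mono _ (FF_int hf x ht)
  · intro z
    by_cases hz : z ∈ ball x ρ
    · rw [Set.indicator_of_mem hz]
      have := hκ (t⁻¹ • (z - x)) (by
        rw [mem_ball, dist_eq_norm] at hz
        rw [norm_smul, norm_inv, Real.norm_of_nonneg ht.le, ← div_eq_inv_mul]
        gcongr)
      simp only
      nlinarith [sq_nonneg (f z)]
    · rw [Set.indicator_of_notMem hz]
      exact mul_nonneg (sq_nonneg _) (kR_nonneg _)
  · exact IntegrableOn.integrable_indicator ((intOn_sq hf x ρ).const_mul κ) measurableSet_ball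

lemma setInt_mono {f : Eu n → ℝ} (hf : Continuous f) {x y : Eu n} {r s : ℝ} (h : ball x r ⊆ ball y s) :
    ∫ z in ball x r, f z^2 ≤ ∫ z in ball y s, f z^2 :=
  setIntegral_mono_set (intOn_sq hf y s) (Eventually.of_forall fun z => sq_nonneg _) (Eventually.of_forall h)

/-- comparing at different centers -/
lemma FF_compare {f : Eu n → ℝ} (hf : Continuous f) {x x' : Eu n} {s t : ℝ} (hs : 0 < s) (ht : 0 < t)
    (hd : dist x' x + s ≤ 3/4 * t) : FF f x' s ≤ 6 * (t/s)^n * FF f x t := by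
  have h1 := FF_le_ball hf x' hs
  have h2 := ball_le_FF hf x (t := t) (ρ := 3/4 * t) (κ := 1) ht (by
    intro y hy; apply kR_ge; rwa [mul_div_assoc, div_self ht.ne', mul_one] at hy)
  have h3 := setInt_mono hf (ball_subset_ball' (by linarith [hd]) : ball x' s ⊆ ball x (3/4 * t))
  calc FF f x' s ≤ 6 * (s^n)⁻¹ * ∫ z in ball x' s, f z^2 := h1
    _ ≤ 6 * (s^n)⁻¹ * (t^n * FF f x t) := by
        apply mul_le_mul_of_nonneg_left _ (by positivity); linarith
    _ = _ := by rw [div_pow]; ring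

/-- Quantitative non-degeneracy of `f`. -/
structure Nondeg (f : Eu n → ℝ) (D c : ℝ) : Prop where
  smooth : ContDiff ℝ 2 f
  harm : ∀ y ∈ ball (0 : Eu n) (63/64), lapl f y = 0
  doub : ∀ x : Eu n, ‖x‖ ≤ 3/4 → ∀ t ∈ Set.Ioc (0:ℝ) (1/16), FF f x (2*t) ≤ D * FF f x t
  low : ∀ x : Eu n, ‖x‖ ≤ 3/4 → c ≤ FF f x (1/32)

lemma nondeg_exists (m : ℕ) (N₀ : ℝ) (hN : 0 < N₀) : ∃ D c : ℝ, 1 ≤ D ∧ 0 < c ∧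
    ∀ f : Eu (m+1) → ℝ, ContDiff ℝ 2 f → (∀ y ∈ ball (0 : Eu (m+1)) (63/64), lapl f y = 0) →
      (∀ ρ ∈ Set.Ioo (0:ℝ) (63/64), freqN f 0 ρ ≤ N₀) → (∫ z in ball (0 : Eu (m+1)) (1/2), f z^2) = 1 →
      Nondeg f D c := by
  obtain ⟨c0, hc0, hQ⟩ := QQ_le_FF m
  set K := N₀ * c0 with hK
  set k1 : ℝ := 6 * 6 * (((31/32)/(1/2))^(2*K) * (6 * ((1/2)^(m+1))⁻¹)) * (31/32)^(m+1) * (6 * 8^(m+1)) with hk1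
  have hk1pos : 0 < k1 := by positivity
  -- lower bound chain
  set b0 : ℝ := (((2/3)/(1/32))^(2*K))⁻¹ * ((2/3)^(m+1))⁻¹ with hb0
  have hb0pos : 0 < b0 := by positivity
  have hchain : ∀ j : ℕ, ∃ c : ℝ, 0 < c ∧ ∀ f : Eu (m+1) → ℝ, ContDiff ℝ 2 f → (∀ y ∈ ball (0 : Eu (m+1)) (63/64), lapl f y = 0) →
     b0 ≤ FF f 0 (1/32) → (∀ x : Eu (m+1), ‖x‖ ≤ 3/4 → FF f x (1/8) ≤ k1) →
     ∀ x : Eu (m+1), ‖x‖ ≤ 3/4 → ‖x‖ ≤ j/64 → c ≤ FF f x (1/32) := by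
    intro j
    induction j with
    | zero =>
      refine ⟨b0, hb0pos, fun f _ _ h _ x _ hx => ?_⟩
      have : x = 0 := by simpa using hx
      rw [this]; exact h
    | succ j ih =>
      obtain ⟨c, hc, ih⟩ := ih
      set c1 := c / (6 * 2^(m+1)) with hc1
      have hc1pos : 0 < c1 := by positivity
      refine ⟨c1^2/k1, by positivity, fun f hf hl hb hk x hx hxj => ?_⟩
      obtain ⟨x', hx'1, hx'2, hx'3⟩ : ∃ x' : Eu (m+1), ‖x'‖ ≤ 3/4 ∧ ‖x'‖ ≤ j/64 ∧ dist x' x ≤ 1/64 := by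
        by_cases h0 : ‖x‖ ≤ 1/64
        · exact ⟨0, by simp; norm_num, by simp; positivity, by simpa using h0⟩
        · push Not at h0
          have hx0 : 0 < ‖x‖ := by linarith
          have hn : ‖(1 - 1/64/‖x‖) • x‖ = ‖x‖ - 1/64 := by
            rw [norm_smul, Real.norm_of_nonneg]
            · field_simp
            · rw [sub_nonneg, div_le_one hx0]; exact h0.le
          refine ⟨(1 - 1/64/‖x‖) • x, ?_, ?_, ?_⟩
          · rw [hn]; linarith
          · rw [hn]; push_cast at hxj; linarith
          · rw [dist_eq_norm, sub_smul, one_smul, sub_sub_cancel_left, norm_neg, norm_smul, norm_div, norm_norm,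
              div_mul_cancel₀ _ hx0.ne']; norm_num
      have h1 := ih f hf hl hb hk x' hx'1 hx'2
      have h2 := FF_compare hf.continuous (x := x) (x' := x') (s := 1/32) (t := 1/16) (by norm_num) (by norm_num)
        (by linarith)
      have h3 : c1 ≤ FF f x (1/16) := by
        rw [hc1, div_le_iff₀ (by positivity)]
        have : (1/16 / (1/32) : ℝ) = 2 := by norm_num
        rw [this] at h2; linarith
      have h4 := FF_doubling hf (x := x) (R := 3/16) (fun y hy => hl y (by
        rw [mem_ball, dist_eq_norm] at hy
        rw [mem_ball_zero_iff]
        calc ‖y‖ = ‖x + (y - x)‖ := by congr 1; abel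
          _ ≤ ‖x‖ + ‖y - x‖ := norm_add_le _ _
          _ < 63/64 := by linarith)) (a := 1/32) (b := 1/16) (by norm_num) (by norm_num) (by norm_num)
      norm_num at h4
      have h5 := hk x hx
      have h6 := FF_nonneg f x (1/32)
      rw [div_le_iff₀ hk1pos]
      norm_num at h3 h5 h6 ⊢
      nlinarith
  obtain ⟨c, hc, hch⟩ := hchain 48
  set c1 := c / (6 * 2^(m+1)) with hc1
  have hc1pos : 0 < c1 := by positivity
  refine ⟨max 1 (k1/c1), c, le_max_left _ _, hc, fun f hf hl hfr hnorm => ?_⟩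
  have hQ' : ∀ t ∈ Set.Ioo (0:ℝ) (63/64), QQ f 0 t ≤ K * FF f 0 t := by
    intro t ht
    refine hQ f hf (63/64) N₀ hN (fun ρ hρ => ?_) t ht
    exact freq_bound m hf hρ.1 (fun y hy => hl y (ball_subset_ball hρ.2.le hy)) (hfr ρ hρ)
  have hlow0 : b0 ≤ FF f 0 (1/32) := by
    have h1 := FF_growth hf hl hQ' (a := 1/32) (b := 2/3) (by norm_num) (by norm_num) (by norm_num)
    have h2 := ball_le_FF hf.continuous (0 : Eu (m+1)) (t := 2/3) (ρ := 1/2) (κ := 1) (by norm_num) (by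
      intro y hy; apply kR_ge; norm_num at hy; linarith)
    rw [hnorm] at h2
    have hp : (0:ℝ) < ((2/3)/(1/32))^(2*K) := by positivity
    have hq : (0:ℝ) < (2/3)^(m+1) := by positivity
    rw [hb0, ← mul_inv, inv_le_iff_one_le_mul₀ (by positivity)]
    calc (1:ℝ) ≤ (2/3)^(m+1) * FF f 0 (2/3) := by linarith
      _ ≤ (2/3)^(m+1) * (((2/3)/(1/32))^(2*K) * FF f 0 (1/32)) := by gcongr
      _ = _ := by ring
  have hup : ∀ x : Eu (m+1), ‖x‖ ≤ 3/4 → FF f x (1/8) ≤ k1 := by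
    intro x hx
    have h1 := FF_le_ball hf.continuous (0 : Eu (m+1)) (t := 1/2) (by norm_num)
    rw [hnorm, mul_one] at h1
    have h2 := FF_growth hf hl hQ' (a := 1/2) (b := 31/32) (by norm_num) (by norm_num) (by norm_num)
    have h3 := ball_le_FF hf.continuous (0 : Eu (m+1)) (t := 31/32) (ρ := 7/8) (κ := 1/6) (by norm_num) (by
      intro y hy
      norm_num at hy
      unfold kR
      have : (1/6:ℝ) ≤ max (1 - ‖y‖^2) 0 := le_max_of_le_left (by nlinarith [norm_nonneg y])
      nlinarith)
    have h4 := FF_le_ball hf.continuous x (t := 1/8) (by norm_num)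
    have h5 := setInt_mono hf.continuous (ball_subset_ball' (by simp; linarith) : ball x (1/8) ⊆ ball (0 : Eu (m+1)) (7/8))
    have e8 : ((1/8:ℝ)^(m+1))⁻¹ = 8^(m+1) := by rw [one_div, inv_pow, inv_inv]
    rw [e8] at h4
    have h6 : ∫ z in ball (0 : Eu (m+1)) (7/8), f z^2 ≤ 6 * ((31/32)^(m+1) * (((31/32)/(1/2))^(2*K) * (6 * ((1/2)^(m+1))⁻¹))) := by
      have : FF f 0 (31/32) ≤ (((31/32)/(1/2))^(2*K) * (6 * ((1/2)^(m+1))⁻¹)) := h2.trans (by gcongr)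
      have h7 : (31/32:ℝ)^(m+1) * FF f 0 (31/32) ≤ (31/32)^(m+1) * (((31/32)/(1/2))^(2*K) * (6 * ((1/2)^(m+1))⁻¹)) := by gcongr
      linarith
    calc FF f x (1/8) ≤ 6 * 8^(m+1) * ∫ z in ball x (1/8), f z^2 := h4
      _ ≤ 6 * 8^(m+1) * (6 * ((31/32)^(m+1) * (((31/32)/(1/2))^(2*K) * (6 * ((1/2)^(m+1))⁻¹)))) := by
          gcongr; exact h5.trans h6
      _ = 1/6 * k1 := by rw [hk1]; ring
      _ ≤ k1 := by linarith
  have hlow : ∀ x : Eu (m+1), ‖x‖ ≤ 3/4 → c ≤ FF f x (1/32) := fun x hx =>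
    hch f hf hl hlow0 hup x hx (by norm_num; linarith)
  refine ⟨hf, hl, fun x hx t ht => ?_, hlow⟩
  have hball : ∀ y ∈ ball x (3/16), lapl f y = 0 := fun y hy => hl y (by
        rw [mem_ball, dist_eq_norm] at hy
        rw [mem_ball_zero_iff]
        calc ‖y‖ = ‖x + (y - x)‖ := by congr 1; abel
          _ ≤ ‖x‖ + ‖y - x‖ := norm_add_le _ _
          _ < 63/64 := by linarith)
  have h4 := FF_doubling hf hball (a := t) (b := 1/16) ht.1 ht.2 (by norm_num)
  have h2 := FF_compare hf.continuous (x := x) (x' := x) (s := 1/32) (t := 1/16) (by norm_num) (by norm_num)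
        (by norm_num)
  have h3 : c1 ≤ FF f x (1/16) := by
    rw [hc1, div_le_iff₀ (by positivity)]
    have : (1/16 / (1/32) : ℝ) = 2 := by norm_num
    rw [this] at h2; linarith [hlow x hx]
  have h5 := hup x hx
  have h6 := FF_nonneg f x t
  have h7 := FF_nonneg f x (2*t)
  have e : (2 * (1/16) : ℝ) = 1/8 := by norm_num
  rw [e] at h4
  have h8 : FF f x (2*t) ≤ k1/c1 * FF f x t := by
    rw [div_mul_eq_mul_div, le_div_iff₀ hc1pos]
    calc FF f x (2*t) * c1 ≤ FF f x (2*t) * FF f x (1/16) := by gcongr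
      _ ≤ FF f x t * FF f x (1/8) := h4
      _ ≤ FF f x t * k1 := by gcongr
      _ = _ := by ring
  exact h8.trans (by gcongr; exact le_max_right _ _)

end partg

section parth
variable {n : ℕ}

lemma mean_eq {f : Eu n → ℝ} (hf : ContDiff ℝ 2 f) (x : Eu n) {R : ℝ} (hR : 0 ≤ R)
    (hl : ∀ y ∈ ball x R, lapl f y = 0) : f x * cR n = ∫ y, f (x + R • y) * kR y := by
  apply le_antisymm (mean_le_global hf x hR fun y hy => (hl y hy).ge)
  have := mean_le_global (f := fun y => - f y) hf.neg x hR fun y hy => by rw [lapl_neg, hl y hy]; simp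
  simp only [neg_mul, integral_neg] at this
  linarith

lemma cov_gen (g : Eu n → ℝ) (x : Eu n) {t : ℝ} (ht : 0 < t) :
    ∫ y, g (x + t • y) * kR y = (t^n)⁻¹ * ∫ z, g z * kR (t⁻¹ • (z - x)) := by
  have h1 : ∫ z, g z * kR (t⁻¹ • (z - x)) = ∫ z, g (x + z) * kR (t⁻¹ • z) := by
    rw [← integral_add_left_eq_self _ x]
    simp
  have h2 := Measure.integral_comp_smul (volume : Measure (Eu n)) (fun z => g (x + z) * kR (t⁻¹ • z)) t
  have e : ∀ y : Eu n, t⁻¹ • t • y = y := fun y => by rw [smul_smul, inv_mul_cancel₀ ht.ne', one_smul]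
  simp only [e] at h2
  rw [h2, h1, abs_of_pos (by positivity)]
  simp

lemma kR_lip : ∃ L : NNReal, LipschitzWith L (kR (n := n)) :=
  ContDiff.lipschitzWith_of_hasCompactSupport hcs_kR contDiff_kR one_ne_zero

lemma cs_ball {f : Eu n → ℝ} (hf : Continuous f) (x : Eu n) {ρ : ℝ} (hρ : 0 < ρ) :
    (∫ z in ball x ρ, |f z|)^2 ≤ (volume : Measure (Eu n)).real (ball x ρ) * ∫ z in ball x ρ, f z^2 := by
  set A := ∫ z in ball x ρ, |f z|
  set V := (volume : Measure (Eu n)).real (ball x ρ)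
  have hV : 0 < V := ENNReal.toReal_pos (measure_ball_pos _ _ hρ).ne' measure_ball_lt_top.ne
  have hi1 : IntegrableOn (fun z => |f z|) (ball x ρ) :=
    (hf.abs.continuousOn.integrableOn_compact (isCompact_closedBall x ρ)).mono_set ball_subset_closedBall
  have hi2 := intOn_sq hf x ρ
  have key : ∀ σ : ℝ, 2 * σ * A ≤ (∫ z in ball x ρ, f z^2) + σ^2 * V := by
    intro σ
    have h1 : ∫ z in ball x ρ, 2 * σ * |f z| ≤ ∫ z in ball x ρ, (f z^2 + σ^2) := by
      apply setIntegral_mono (hi1.const_mul _)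
      · exact hi2.fun_add (integrableOn_const measure_ball_lt_top.ne)
      · intro z
        simp only
        nlinarith [sq_nonneg (|f z| - σ), sq_abs (f z)]
    rw [integral_const_mul, integral_add hi2 (integrableOn_const measure_ball_lt_top.ne)] at h1
    simp only [integral_const, smul_eq_mul, MeasurableSet.univ, measureReal_restrict_apply, Set.univ_inter] at h1
    linarith
  have h := key (A/V)
  have e1 : 2 * (A/V) * A = 2 * A^2/V := by ring
  have e2 : (A/V)^2 * V = A^2/V := by field_simp
  rw [e1, e2] at h
  have h3 : A^2/V ≤ ∫ z in ball x ρ, f z^2 := by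
    have : 2 * A^2/V = A^2/V + A^2/V := by ring
    linarith
  rw [div_le_iff₀ hV] at h3
  linarith

section
variable {f : Eu n → ℝ} {D c : ℝ}

lemma Nondeg.iter (h : Nondeg f D c) (hD : 1 ≤ D) {x : Eu n} (hx : ‖x‖ ≤ 3/4) (k : ℕ) {t : ℝ} (ht : 0 < t)
    (hk : 2^k * t ≤ 1/8) : FF f x (2^k * t) ≤ D^k * FF f x t := by
  induction k with
  | zero => simp
  | succ k ih =>
    have h1 : (2:ℝ)^k * t ≤ 1/16 := by rw [pow_succ] at hk; linarith
    have h2 := h.doub x hx (2^k * t) ⟨by positivity, h1⟩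
    have h3 := ih (by linarith)
    calc FF f x (2^(k+1) * t) = FF f x (2 * (2^k * t)) := by congr 1; ring
      _ ≤ D * FF f x (2^k * t) := h2
      _ ≤ D * (D^k * FF f x t) := by gcongr
      _ = _ := by ring

lemma two_pow_bound (n : ℕ) : (2 * (n+1) : ℝ) ≤ 2^(n+2) := by
  have : n + 1 < 2^(n+1) := Nat.lt_two_pow_self
  have h : ((n+1 : ℕ):ℝ) ≤ ((2^(n+1) : ℕ) : ℝ) := by exact_mod_cast this.le
  push_cast at h
  rw [pow_succ]; linarith

lemma Nondeg.stepA (h : Nondeg f D c) (hD : 1 ≤ D) (a : ℕ) {x x' : Eu n} {ℓ : ℝ} (hℓ : 0 < ℓ)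
    (hℓ1 : 2^(n+2) * ℓ ≤ 1/8) (hx' : ‖x'‖ ≤ 3/4) (hxx : dist x x' ≤ n * ℓ) :
    FF f x ℓ ≤ 6 * (2^(n+2))^n * D^(n+2+a) * FF f x' (ℓ/2^a) := by
  have hb := two_pow_bound n
  have h1 := FF_compare h.smooth.continuous (x := x') (x' := x) (s := ℓ) (t := 2^(n+2) * ℓ) hℓ (by positivity) (by
    have : (n+1) * ℓ ≤ 2^(n+2)/2 * ℓ := by gcongr; linarith
    have : 0 ≤ 2^(n+2) * ℓ := by positivity
    linarith)
  rw [mul_div_assoc, div_self hℓ.ne', mul_one] at h1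
  have h2 := h.iter hD hx' (n+2+a) (t := ℓ/2^a) (by positivity) (by
    rw [pow_add]; field_simp; linarith)
  have e : 2^(n+2+a) * (ℓ/2^a) = 2^(n+2) * ℓ := by rw [pow_add]; field_simp
  rw [e] at h2
  calc FF f x ℓ ≤ 6 * (2^(n+2))^n * FF f x' (2^(n+2) * ℓ) := h1
    _ ≤ 6 * (2^(n+2))^n * (D^(n+2+a) * FF f x' (ℓ/2^a)) := by gcongr
    _ = _ := by ring

lemma lip_const (n : ℕ) (D : ℝ) (hD : 1 ≤ D) : ∃ K : ℝ, 0 < K ∧ ∀ (f : Eu n → ℝ) (c : ℝ) (_ : Nondeg f D c) 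
    (x z z' : Eu n) (ℓ : ℝ) (_ : 0 < ℓ) (_ : 2^(n+2) * ℓ ≤ 1/8) (_ : ‖x‖ ≤ 3/4) (_ : dist z x ≤ n * ℓ) (_ : dist z' x ≤ n * ℓ),
    (f z - f z')^2 ≤ K * (dist z z' / ℓ)^2 * FF f x ℓ := by
  obtain ⟨L, hL⟩ := kR_lip (n := n)
  have hcR := cR_pos (n := n)
  set ω := (volume : Measure (Eu n)).real (ball 0 1) with hω
  set K0 : ℝ := L^2 * ((n+1)^n * ω) * ((2^(n+2))^n * D^(n+2)) / cR n^2 with hK0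
  have hK00 : 0 ≤ K0 := by positivity
  refine ⟨K0 + 1, by positivity, ?_⟩
  intro f c h x z z' ℓ hℓ hℓ1 hx hz hz'
  have hb := two_pow_bound n
  have hf := h.smooth
  set ρ := (n+1) * ℓ with hρ
  have hρ0 : 0 < ρ := by positivity
  have hT : ρ ≤ 1/16 := by
    have : (n+1) * ℓ ≤ 2^(n+2)/2 * ℓ := by gcongr; linarith
    rw [hρ]; linarith
  have hn1 : n * ℓ ≤ 1/16 := by rw [hρ] at hT; linarith
  have hmean : ∀ w : Eu n, dist w x ≤ n * ℓ → f w * cR n = (ℓ^n)⁻¹ * ∫ y, f y * kR (ℓ⁻¹ • (y - w)) := by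
    intro w hw
    rw [← cov_gen f w hℓ]
    apply mean_eq hf w hℓ.le
    intro y hy
    apply h.harm
    rw [mem_ball] at hy
    rw [mem_ball]
    calc dist y 0 ≤ dist y w + dist w x + dist x 0 := dist_triangle4 _ _ _ _
      _ < 63/64 := by
        rw [dist_zero_right]
        have : dist y w + dist w x ≤ ρ := by rw [hρ]; linarith
        linarith
  have hk := continuous_kR (n := n)
  have hint : ∀ w : Eu n, Integrable (fun y => f y * kR (ℓ⁻¹ • (y - w))) := by
    intro w
    have : Continuous (fun y => f y * kR (ℓ⁻¹ • (y - w))) := by have := hf.continuous; fun_prop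
    exact this.integrable_of_hasCompactSupport (hcs_shift hℓ).mul_left
  set A := ∫ y in ball x ρ, |f y| with hA
  have hi1 : IntegrableOn (fun z => |f z|) (ball x ρ) :=
    (hf.continuous.abs.continuousOn.integrableOn_compact (isCompact_closedBall x ρ)).mono_set ball_subset_closedBall
  have hkz : ∀ w y : Eu n, dist w x ≤ n * ℓ → y ∉ ball x ρ → kR (ℓ⁻¹ • (y - w)) = 0 := by
    intro w y hw hy
    apply kR_zero
    rw [mem_ball, not_lt] at hy
    rw [norm_smul, norm_inv, Real.norm_of_nonneg hℓ.le, ← div_eq_inv_mul, le_div_iff₀ hℓ, ← dist_eq_norm]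
    have := dist_triangle y w x
    rw [hρ] at hy; linarith
  have hdiff : |f z - f z'| * cR n ≤ (ℓ^n)⁻¹ * (L * (dist z z'/ℓ) * A) := by
    have e : (f z - f z') * cR n = (ℓ^n)⁻¹ * ∫ y, f y * (kR (ℓ⁻¹ • (y - z)) - kR (ℓ⁻¹ • (y - z'))) := by
      have : ∫ y, f y * (kR (ℓ⁻¹ • (y - z)) - kR (ℓ⁻¹ • (y - z'))) =
        (∫ y, f y * kR (ℓ⁻¹ • (y - z))) - ∫ y, f y * kR (ℓ⁻¹ • (y - z')) := by
        rw [← integral_sub (hint z) (hint z')]; congr 1; ext y; ring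
      rw [this, sub_mul, hmean z hz, hmean z' hz']; ring
    have e2 : |f z - f z'| * cR n = |(f z - f z') * cR n| := by rw [abs_mul, abs_of_pos hcR]
    rw [e2, e, abs_mul, abs_of_pos (by positivity : 0 < (ℓ^n)⁻¹)]
    apply mul_le_mul_of_nonneg_left _ (by positivity)
    rw [hA, ← integral_const_mul, ← integral_indicator measurableSet_ball, ← Real.norm_eq_abs]
    apply norm_integral_le_of_norm_le (IntegrableOn.integrable_indicator (hi1.const_mul _) measurableSet_ball)
    apply Eventually.of_forall
    intro y
    by_cases hy : y ∈ ball x ρ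
    · rw [Set.indicator_of_mem hy, norm_mul, mul_comm, Real.norm_eq_abs (f y)]
      apply mul_le_mul_of_nonneg_right _ (abs_nonneg _)
      rw [← dist_eq_norm]
      refine (hL.dist_le_mul _ _).trans (le_of_eq ?_)
      rw [dist_eq_norm, ← smul_sub, norm_smul, norm_inv, Real.norm_of_nonneg hℓ.le, sub_sub_sub_cancel_left,
        dist_comm, dist_eq_norm]; ring
    · rw [Set.indicator_of_notMem hy, hkz z y hz hy, hkz z' y hz' hy]; simp
  have hAsq := cs_ball hf.continuous x hρ0
  have hvol : (volume : Measure (Eu n)).real (ball x ρ) = ρ^n * ω := by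
    rw [hω, measureReal_def, measureReal_def, Measure.addHaar_ball_of_pos volume x hρ0]
    simp [hρ0.le]
  have h2 := ball_le_FF hf.continuous x (t := 2^(n+2) * ℓ) (ρ := ρ) (κ := 1) (by positivity) (by
    intro y hy; apply kR_ge
    refine hy.trans ?_
    rw [div_le_iff₀ (by positivity), hρ]
    have : (n+1) * ℓ ≤ 2^(n+2)/2 * ℓ := by gcongr; linarith
    have : 0 ≤ 2^(n+2) * ℓ := by positivity
    linarith)
  have h3 := h.iter hD hx (n+2) hℓ hℓ1
  have hFF := FF_nonneg f x ℓ
  have hAA : A^2 ≤ (ℓ^n)^2 * (((n+1)^n * ω) * ((2^(n+2))^n * D^(n+2))) * FF f x ℓ := by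
    calc A^2 ≤ (ρ^n * ω) * ∫ z in ball x ρ, f z^2 := by rw [← hvol]; exact hAsq
      _ ≤ (ρ^n * ω) * ((2^(n+2) * ℓ)^n * (D^(n+2) * FF f x ℓ)) := by
          apply mul_le_mul_of_nonneg_left _ (by positivity)
          rw [one_mul] at h2
          exact h2.trans (by gcongr)
      _ = _ := by rw [hρ, mul_pow, mul_pow]; ring
  have hd0 : 0 ≤ dist z z' / ℓ := by positivity
  have hsq : (f z - f z')^2 * cR n^2 ≤ L^2 * (dist z z'/ℓ)^2 * (((n+1)^n * ω) * ((2^(n+2))^n * D^(n+2))) * FF f x ℓ := by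
    calc (f z - f z')^2 * cR n^2 = (|f z - f z'| * cR n)^2 := by rw [mul_pow, sq_abs]
      _ ≤ ((ℓ^n)⁻¹ * (L * (dist z z'/ℓ) * A))^2 := by gcongr
      _ = ((ℓ^n)⁻¹)^2 * (L^2 * (dist z z'/ℓ)^2) * A^2 := by ring
      _ ≤ ((ℓ^n)⁻¹)^2 * (L^2 * (dist z z'/ℓ)^2) * ((ℓ^n)^2 * (((n+1)^n * ω) * ((2^(n+2))^n * D^(n+2))) * FF f x ℓ) := by gcongr
      _ = _ := by field_simp
  have hfin : (f z - f z')^2 ≤ K0 * (dist z z'/ℓ)^2 * FF f x ℓ := by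
    rw [hK0, div_mul_eq_mul_div, div_mul_eq_mul_div, le_div_iff₀ (by positivity)]
    refine hsq.trans (le_of_eq ?_); ring
  refine hfin.trans ?_
  have : 0 ≤ (dist z z'/ℓ)^2 * FF f x ℓ := by positivity
  nlinarith

lemma exists_big (hf : Continuous f) (x : Eu n) {ℓ : ℝ} (hℓ : 0 < ℓ) :
    ∃ z0 : Eu n, dist z0 x ≤ ℓ ∧ FF f x ℓ ≤ cR n * f z0^2 := by
  obtain ⟨z0, hz0, hmax⟩ := (isCompact_closedBall x ℓ).exists_isMaxOn ⟨x, by simp [hℓ.le]⟩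
    (hf.pow 2).continuousOn
  refine ⟨z0, hz0, ?_⟩
  unfold FF cR
  rw [mul_comm, ← integral_const_mul]
  have hk := continuous_kR (n := n)
  apply integral_mono _ (integrable_kR.const_mul _)
  · intro y
    by_cases hy : ‖y‖ ≤ 1
    · apply mul_le_mul_of_nonneg_right _ (kR_nonneg y)
      apply hmax
      simp only [mem_closedBall, dist_self_add_left, norm_smul, Real.norm_of_nonneg hℓ.le]
      nlinarith
    · simp only
      rw [kR_zero (by linarith)]; simp
  · have : Continuous (fun y => f (x + ℓ • y)^2 * kR y) := by fun_prop
    exact this.integrable_of_hasCompactSupport hcs_kR.mul_left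
end

end parth

section parti
variable {n : ℕ}

/-- closed coordinate cube of centre `x` and half-side `ℓ` -/
def cube (x : Eu n) (ℓ : ℝ) : Set (Eu n) := {z | ∀ i, |z i - x i| ≤ ℓ}

theorem vol_cube (x : Eu n) {ℓ : ℝ} (hℓ : 0 ≤ ℓ) :
    volume (cube x ℓ) = ENNReal.ofReal ((2*ℓ)^n) := by
  have h1 : cube x ℓ = (WithLp.ofLp : Eu n → (Fin n → ℝ)) ⁻¹'
      (Set.pi Set.univ (fun i => Set.Icc (x i - ℓ) (x i + ℓ))) := by
    ext z
    simp only [cube, Set.mem_setOf_eq, Set.mem_preimage, Set.mem_pi, Set.mem_univ, true_implies,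
      Set.mem_Icc, abs_le]
    refine forall_congr' fun i => ?_
    constructor
    · rintro ⟨a, b⟩; constructor <;> linarith
    · rintro ⟨a, b⟩; constructor <;> linarith
  rw [h1, (PiLp.volume_preserving_ofLp (Fin n)).measure_preimage
    (MeasurableSet.pi Set.countable_univ (fun i _ => measurableSet_Icc)).nullMeasurableSet,
    volume_pi_pi]
  simp only [Real.volume_Icc]
  rw [Finset.prod_congr rfl (fun i _ => by rw [show x i + ℓ - (x i - ℓ) = 2*ℓ by ring])]
  rw [Finset.prod_const, Finset.card_univ, Fintype.card_fin, ENNReal.ofReal_pow (by linarith)]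

/-- centres of the subcubes -/
noncomputable def subc (x : Eu n) (ℓ : ℝ) (M : ℕ) (k : Fin n → Fin M) : Eu n :=
  WithLp.toLp 2 (fun i => x i + ℓ * ((2*((k i : ℕ) : ℝ)+1)/M - 1))

theorem subc_apply (x : Eu n) (ℓ : ℝ) (M : ℕ) (k : Fin n → Fin M) (i : Fin n) :
    subc x ℓ M k i = x i + ℓ * ((2*((k i : ℕ) : ℝ)+1)/M - 1) := rfl

theorem cell_exists {M : ℕ} (hM : 0 < M) {s : ℝ} (h0 : 0 ≤ s) (h1 : s ≤ 1) :
    ∃ k : Fin M, ((k : ℕ) : ℝ) ≤ M * s ∧ M * s ≤ ((k : ℕ) : ℝ) + 1 := by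
  have hM' : (0:ℝ) < M := by exact_mod_cast hM
  by_cases h : ⌊(M:ℝ) * s⌋₊ < M
  · exact ⟨⟨_, h⟩, Nat.floor_le (by positivity), (Nat.lt_floor_add_one _).le⟩
  · have h2 : (M:ℝ) ≤ M * s := by
      have : M ≤ ⌊(M:ℝ) * s⌋₊ := by omega
      exact (Nat.le_floor_iff (by positivity)).1 this
    refine ⟨⟨M-1, by omega⟩, ?_, ?_⟩
    · have : ((M-1 : ℕ) : ℝ) ≤ M := by exact_mod_cast Nat.sub_le _ _
      simp only; linarith
    · have : ((M-1 : ℕ) : ℝ) = M - 1 := by push_cast [Nat.cast_sub hM]; ring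
      simp only [this]; nlinarith

theorem cube_cover (x : Eu n) {ℓ : ℝ} (hℓ : 0 < ℓ) {M : ℕ} (hM : 0 < M) {z : Eu n}
    (hz : z ∈ cube x ℓ) : ∃ k : Fin n → Fin M, z ∈ cube (subc x ℓ M k) (ℓ/M) := by
  have hM' : (0:ℝ) < M := by exact_mod_cast hM
  have h : ∀ i, ∃ k : Fin M, |z i - (x i + ℓ * ((2*((k : ℕ) : ℝ)+1)/M - 1))| ≤ ℓ / M := by
    intro i
    have hzi := abs_le.1 (hz i)
    set s : ℝ := ((z i - x i)/ℓ + 1)/2 with hs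
    have e1 : -1 ≤ (z i - x i)/ℓ := by rw [le_div_iff₀ hℓ]; linarith
    have e2 : (z i - x i)/ℓ ≤ 1 := by rw [div_le_iff₀ hℓ]; linarith
    obtain ⟨k, k1, k2⟩ := cell_exists hM (s := s) (by linarith) (by linarith)
    refine ⟨k, ?_⟩
    have e3 : z i - (x i + ℓ * ((2*((k : ℕ) : ℝ)+1)/M - 1))
        = (ℓ/M) * (2*(M*s) - 2*((k:ℕ):ℝ) - 1) := by
      rw [hs]; field_simp; ring
    rw [e3, abs_mul, abs_of_pos (by positivity)]
    have : |2*(M*s) - 2*((k:ℕ):ℝ) - 1| ≤ 1 := by rw [abs_le]; constructor <;> linarith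
    calc _ ≤ ℓ/M*1 := by gcongr
      _ = _ := mul_one _
  choose k hk using h
  exact ⟨k, fun i => by rw [subc_apply]; exact hk i⟩

theorem subc_dist (x : Eu n) {ℓ : ℝ} (hℓ : 0 < ℓ) {M : ℕ} (hM : 0 < M) (k : Fin n → Fin M) :
    ‖subc x ℓ M k - x‖ ≤ n * (ℓ - ℓ/M) := by
  have hM' : (0:ℝ) < M := by exact_mod_cast hM
  have hM1 : (1:ℝ) ≤ M := by exact_mod_cast hM
  have h0 : 0 ≤ ℓ - ℓ/M := by
    have : ℓ/M ≤ ℓ := div_le_self hℓ.le hM1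
    linarith
  refine eu_norm_le _ h0 (fun i => ?_)
  have : (subc x ℓ M k - x) i = ℓ * ((2*((k i : ℕ) : ℝ)+1)/M - 1) := by
    rw [PiLp.sub_apply, subc_apply]; ring
  rw [this, abs_mul, abs_of_pos hℓ]
  have hk : ((k i : ℕ):ℝ) + 1 ≤ M := by exact_mod_cast (k i).2
  have hk0 : (0:ℝ) ≤ ((k i : ℕ):ℝ) := Nat.cast_nonneg _
  have : |(2*((k i : ℕ) : ℝ)+1)/M - 1| ≤ 1 - 1/M := by
    rw [abs_le]
    constructor
    · have : 1/(M:ℝ) ≤ (2*((k i : ℕ) : ℝ)+1)/M := by gcongr; linarith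
      linarith
    · have : (2*((k i : ℕ) : ℝ)+1)/M ≤ (2*M - 1)/M := by gcongr; linarith
      have e : (2*(M:ℝ) - 1)/M = 2 - 1/M := by field_simp
      linarith
  calc _ ≤ ℓ * (1 - 1/M) := by gcongr
    _ = _ := by ring

theorem cube_dist {x z : Eu n} {ℓ : ℝ} (hℓ : 0 ≤ ℓ) (hz : z ∈ cube x ℓ) : dist z x ≤ n * ℓ := by
  rw [dist_eq_norm]
  exact eu_norm_le _ hℓ (fun i => by rw [PiLp.sub_apply]; exact hz i)

/-- one-step constants -/
theorem step_consts (n : ℕ) (hn : 1 ≤ n) (D : ℝ) (hD : 1 ≤ D) :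
    ∃ (M : ℕ) (c1 : ℝ), 2 ≤ M ∧ 0 < c1 ∧ c1 < 1 ∧ ∀ (f : Eu n → ℝ) (c : ℝ), Nondeg f D c →
      ∀ (x : Eu n) (ℓ : ℝ), 0 < ℓ → 2^(n+2)*ℓ ≤ 1/8 → ‖x‖ ≤ 3/4 - n*ℓ →
        (∀ k : Fin n → Fin M, c1 * FF f x ℓ ≤ FF f (subc x ℓ M k) (ℓ/M)) ∧
        (∃ k0 : Fin n → Fin M, ∀ z ∈ cube x ℓ, z ∈ cube (subc x ℓ M k0) (ℓ/M) →
          c1 * FF f x ℓ ≤ f z^2) := by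
  obtain ⟨K, hK, hlip⟩ := lip_const n D hD
  have hcR := cR_pos (n := n)
  obtain ⟨a, ha⟩ : ∃ a : ℕ, K*(4*n^2)*(4*cR n) ≤ a := exists_nat_ge _
  set M : ℕ := 2^(a+1) with hM
  have hM2 : 2 ≤ M := by rw [hM, pow_succ]; have := Nat.one_le_two_pow (n := a); omega
  have hMp : (0:ℝ) < M := by positivity
  have haM : K*(4*n^2)*(4*cR n) ≤ (M:ℝ)^2 := by
    have h1 : a < 2^a := Nat.lt_two_pow_self
    have h2 : a ≤ M := by rw [hM, pow_succ]; omega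
    have h3 : (a:ℝ) ≤ M := by exact_mod_cast h2
    have h4 : (1:ℝ) ≤ M := by exact_mod_cast (by omega : 1 ≤ M)
    nlinarith
  set c2 : ℝ := 1/(6*(2^(n+2))^n*D^(n+2+(a+1))) with hc2
  have hc2p : 0 < c2 := by positivity
  refine ⟨M, min (1/(4*cR n)) (min c2 (1/2)), hM2, by positivity, ?_, ?_⟩
  · exact lt_of_le_of_lt ((min_le_right _ _).trans (min_le_right _ _)) (by norm_num)
  intro f c hf x ℓ hℓ hℓ1 hx
  have hF := FF_nonneg f x ℓ
  have hnl : 0 ≤ (n:ℝ)*ℓ := by positivity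
  have hMr : (M:ℝ) = 2^(a+1) := by rw [hM]; push_cast; rfl
  constructor
  · intro k
    have hd := subc_dist x hℓ (by omega : 0 < M) k
    have hdl : 0 ≤ (n:ℝ) * (ℓ/M) := by positivity
    have hx' : ‖subc x ℓ M k‖ ≤ 3/4 := by
      calc _ = ‖x + (subc x ℓ M k - x)‖ := by congr 1; abel
        _ ≤ ‖x‖ + ‖subc x ℓ M k - x‖ := norm_add_le _ _
        _ ≤ _ := by nlinarith
    have hxx : dist x (subc x ℓ M k) ≤ n*ℓ := by
      rw [dist_comm, dist_eq_norm]; nlinarith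
    have h := hf.stepA hD (a+1) hℓ hℓ1 hx' hxx
    rw [← hMr] at h
    have hG := FF_nonneg f (subc x ℓ M k) (ℓ/M)
    calc _ ≤ c2 * FF f x ℓ := by
            gcongr
            exact (min_le_right _ _).trans (min_le_left _ _)
      _ ≤ c2 * (6*(2^(n+2))^n*D^(n+2+(a+1)) * FF f (subc x ℓ M k) (ℓ/M)) := by gcongr
      _ = _ := by
        rw [hc2]; field_simp
  · obtain ⟨z0, hz0, hbig⟩ := exists_big hf.smooth.continuous x hℓ
    have hz0c : z0 ∈ cube x ℓ := by
      intro i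
      have := eu_coord_le (z0 - x) i
      rw [PiLp.sub_apply, ← dist_eq_norm] at this
      linarith
    obtain ⟨k0, hk0⟩ := cube_cover x hℓ (by omega : 0 < M) hz0c
    refine ⟨k0, fun z hz hzk => ?_⟩
    have hx34 : ‖x‖ ≤ 3/4 := by linarith
    have hl := hlip f c hf x z z0 ℓ hℓ hℓ1 hx34 (cube_dist hℓ.le hz) (cube_dist hℓ.le hz0c)
    have hd : dist z z0 ≤ n * (2*(ℓ/M)) := by
      rw [dist_eq_norm]
      refine eu_norm_le _ (by positivity) (fun i => ?_)
      rw [PiLp.sub_apply]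
      have a1 := abs_le.1 (hk0 i)
      have a2 := abs_le.1 (hzk i)
      rw [abs_le]; constructor <;> linarith [a1.1, a1.2, a2.1, a2.2]
    have hd2 : dist z z0 / ℓ ≤ 2*n/M := by
      rw [div_le_iff₀ hℓ]
      calc _ ≤ _ := hd
        _ = _ := by ring
    have hd3 : K * (dist z z0/ℓ)^2 ≤ 1/(4*cR n) := by
      calc _ ≤ K*(2*n/M)^2 := by gcongr
        _ = K*(4*n^2)/M^2 := by rw [div_pow]; ring
        _ ≤ 1/(4*cR n) := by
          rw [div_le_div_iff₀ (by positivity) (by positivity)]; linarith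
    have h5 : (f z - f z0)^2 ≤ 1/(4*cR n) * FF f x ℓ := hl.trans (by gcongr)
    have h6 : f z0^2 ≤ 2*f z^2 + 2*(f z - f z0)^2 := by nlinarith [sq_nonneg (2*f z - f z0)]
    have h7 : FF f x ℓ ≤ cR n * (2*f z^2 + 2*(1/(4*cR n) * FF f x ℓ)) :=
      hbig.trans (by gcongr; linarith)
    have h8 : cR n * (2*f z^2 + 2*(1/(4*cR n) * FF f x ℓ)) = 2*cR n*f z^2 + FF f x ℓ/2 := by
      field_simp; ring
    have h9 : 1/(4*cR n) * FF f x ℓ ≤ f z^2 := by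
      rw [h8] at h7
      rw [div_mul_eq_mul_div, one_mul, div_le_iff₀ (by positivity)]
      linarith
    calc _ ≤ 1/(4*cR n) * FF f x ℓ := by gcongr; exact min_le_left _ _
      _ ≤ _ := h9

end parti

section partj
variable {n : ℕ}

theorem bad_induct (n : ℕ) (hn : 1 ≤ n) (D : ℝ) (hD : 1 ≤ D) :
    ∃ (q c1 : ℝ), 0 < q ∧ q < 1 ∧ 0 < c1 ∧ c1 < 1 ∧ ∀ (f : Eu n → ℝ) (c : ℝ), Nondeg f D c →
      ∀ (ε : ℝ), 0 < ε → ∀ (j : ℕ) (x : Eu n) (ℓ : ℝ), 0 < ℓ → 2^(n+2)*ℓ ≤ 1/8 →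
        ‖x‖ ≤ 3/4 - n*ℓ → ε^2 ≤ c1^j * FF f x ℓ →
        volume {z ∈ cube x ℓ | |f z| < ε} ≤ ENNReal.ofReal (q^j * (2*ℓ)^n) := by
  obtain ⟨M, c1, hM, hc1, hc1', hstep⟩ := step_consts n hn D hD
  have hMp : (0:ℝ) < M := by positivity
  have hM2 : (2:ℝ) ≤ M := by exact_mod_cast hM
  have hMn : (2:ℝ) ≤ (M:ℝ)^n := hM2.trans (le_self_pow₀ (by linarith) (by omega))
  have hq0 : 0 < 1 - 1/(M:ℝ)^n := by
    have : 1/(M:ℝ)^n ≤ 1/2 := by gcongr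
    linarith
  refine ⟨1 - 1/(M:ℝ)^n, c1, hq0, ?_, hc1, hc1', ?_⟩
  · have : 0 < 1/(M:ℝ)^n := by positivity
    linarith
  set q : ℝ := 1 - 1/(M:ℝ)^n with hq
  intro f c hf ε hε j
  induction j with
  | zero =>
    intro x ℓ hℓ _ _ _
    rw [pow_zero, one_mul, ← vol_cube x hℓ.le]
    exact measure_mono (fun z hz => hz.1)
  | succ j ih =>
    intro x ℓ hℓ hℓ1 hx hεF
    obtain ⟨hall, k0, hk0⟩ := hstep f c hf x ℓ hℓ hℓ1 hx
    have hlM : ℓ/M ≤ ℓ := div_le_self hℓ.le (by linarith)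
    have hsub : {z ∈ cube x ℓ | |f z| < ε} ⊆
        ⋃ k ∈ (Finset.univ.erase k0 : Finset (Fin n → Fin M)),
          {z ∈ cube (subc x ℓ M k) (ℓ/M) | |f z| < ε} := by
      rintro z ⟨hz, hzε⟩
      obtain ⟨k, hk⟩ := cube_cover x hℓ (by omega : 0 < M) hz
      refine Set.mem_iUnion₂.2 ⟨k, ?_, hk, hzε⟩
      refine Finset.mem_erase.2 ⟨?_, Finset.mem_univ _⟩
      rintro rfl
      have h1 := hk0 z hz hk
      have h2 : f z^2 < ε^2 := by
        rw [← sq_abs]; gcongr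
      have h3 : c1^(j+1) * FF f x ℓ ≤ c1 * FF f x ℓ := by
        gcongr
        · exact FF_nonneg _ _ _
        · rw [pow_succ]
          exact mul_le_of_le_one_left hc1.le (pow_le_one₀ hc1.le hc1'.le)
      linarith
    refine (measure_mono hsub).trans ((measure_biUnion_finset_le _ _).trans ?_)
    have hb : ∀ k ∈ (Finset.univ.erase k0 : Finset (Fin n → Fin M)),
        volume {z ∈ cube (subc x ℓ M k) (ℓ/M) | |f z| < ε}
          ≤ ENNReal.ofReal (q^j * (2*(ℓ/M))^n) := by
      intro k _
      refine ih _ _ (by positivity) (le_trans (by gcongr) hℓ1) ?_ ?_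
      · have hd := subc_dist x hℓ (by omega : 0 < M) k
        calc _ = ‖x + (subc x ℓ M k - x)‖ := by congr 1; abel
          _ ≤ ‖x‖ + ‖subc x ℓ M k - x‖ := norm_add_le _ _
          _ ≤ _ := by nlinarith
      · calc ε^2 ≤ c1^j * (c1 * FF f x ℓ) := by rw [← mul_assoc, ← pow_succ]; exact hεF
          _ ≤ _ := by gcongr; exact hall k
    refine (Finset.sum_le_sum hb).trans ?_
    rw [Finset.sum_const, Finset.card_erase_of_mem (Finset.mem_univ _), Finset.card_univ,
      Fintype.card_fun, Fintype.card_fin, Fintype.card_fin, nsmul_eq_mul,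
      ← ENNReal.ofReal_natCast, ← ENNReal.ofReal_mul (by positivity)]
    apply ENNReal.ofReal_le_ofReal
    rw [Nat.cast_sub (Nat.one_le_pow _ _ (by omega))]
    push_cast
    rw [pow_succ, ← mul_div_assoc, div_pow, hq]
    apply le_of_eq
    field_simp

theorem bad_measure (n : ℕ) (hn : 1 ≤ n) (D c : ℝ) (hD : 1 ≤ D) (hc : 0 < c) :
    ∃ (Cm s : ℝ), 0 < Cm ∧ 0 < s ∧ ∀ (f : Eu n → ℝ), Nondeg f D c →
      ∀ (ε : ℝ), 0 < ε →
        volume {z ∈ ball (0 : Eu n) (21/32) | |f z| < ε} ≤ ENNReal.ofReal (Cm * ε^s) := by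
  obtain ⟨q, c1, hq0, hq1, hc10, hc11, H⟩ := bad_induct n hn D hD
  set b := n+2 with hb
  set N : ℕ := 2^(b+5) with hN
  have hN0 : 0 < N := by positivity
  have hNp : (0:ℝ) < N := by positivity
  have hNr : (N:ℝ) = 2^(b+5) := by rw [hN]; push_cast; rfl
  have hnb : 2*((n:ℝ)+1) ≤ 2^b := two_pow_bound n
  have hnN : (n:ℝ) * (1/N) ≤ 1/64 := by
    rw [mul_one_div, div_le_iff₀ hNp, hNr, pow_add]; linarith
  set c3 : ℝ := c / D^b with hc3
  have hc3p : 0 < c3 := by positivity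
  set s : ℝ := 2 * Real.log q / Real.log c1 with hs
  have hlq : Real.log q < 0 := Real.log_neg hq0 hq1
  have hlc : Real.log c1 < 0 := Real.log_neg hc10 hc11
  have hsp : 0 < s := div_pos_of_neg_of_neg (by linarith) hlc
  have hqs : ∀ j : ℕ, q^j = (c1^j)^(s/2) := by
    intro j
    rw [← Real.rpow_natCast, ← Real.rpow_natCast, ← Real.rpow_mul hc10.le,
      Real.rpow_def_of_pos hq0, Real.rpow_def_of_pos hc10]
    congr 1
    have hne := hlc.ne
    rw [hs]; field_simp
  refine ⟨2^n * q⁻¹ * c3^(-(s/2)), s, by positivity, hsp, ?_⟩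
  intro f hf ε hε
  -- cover
  set P : Set (Fin n → Fin N) := {k | ‖subc (0 : Eu n) 1 N k‖ ≤ 3/4 - n*(1/N)} with hP
  have hFlow : ∀ x : Eu n, ‖x‖ ≤ 3/4 → c3 ≤ FF f x (1/N) := by
    intro x hx
    have h1 := hf.low x hx
    have h2 : ∀ i : ℕ, FF f x (1/32) ≤ D^i * FF f x (1/32/2^i) := by
      intro i
      induction i with
      | zero => simp
      | succ i ih =>
        have h3 := hf.doub x hx (1/32/2^(i+1)) ⟨by positivity, by
          have : (1:ℝ) ≤ 2^(i+1) := one_le_pow₀ (by norm_num)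
          calc (1/32/2^(i+1) : ℝ) ≤ 1/32 := div_le_self (by norm_num) this
            _ ≤ _ := by norm_num⟩
        have h4 : (2*(1/32/2^(i+1)) : ℝ) = 1/32/2^i := by rw [pow_succ]; field_simp
        rw [h4] at h3
        calc _ ≤ _ := ih
          _ ≤ D^i * (D * FF f x (1/32/2^(i+1))) := by gcongr
          _ = _ := by ring
    have h5 : (1/32/2^b : ℝ) = 1/N := by rw [hNr, pow_add]; norm_num; ring
    rw [hc3, div_le_iff₀ (by positivity), ← h5, mul_comm]
    exact h1.trans (h2 b)
  have hsub : {z ∈ ball (0 : Eu n) (21/32) | |f z| < ε} ⊆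
      ⋃ k ∈ (Finset.univ : Finset (Fin n → Fin N)),
        {z ∈ {z ∈ cube (subc 0 1 N k) (1/N) | |f z| < ε} | k ∈ P} := by
    rintro z ⟨hz, hzε⟩
    rw [mem_ball_zero_iff] at hz
    have hzc : z ∈ cube (0 : Eu n) 1 := by
      intro i
      have := eu_coord_le z i
      simp only [PiLp.zero_apply, sub_zero]; linarith
    obtain ⟨k, hk⟩ := cube_cover 0 one_pos hN0 hzc
    refine Set.mem_iUnion₂.2 ⟨k, Finset.mem_univ _, ⟨hk, hzε⟩, ?_⟩
    have hd := cube_dist (by positivity) hk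
    rw [dist_comm, dist_eq_norm] at hd
    change ‖subc (0 : Eu n) 1 N k‖ ≤ 3/4 - n*(1/N)
    calc _ = ‖z + (subc 0 1 N k - z)‖ := by congr 1; abel
      _ ≤ ‖z‖ + ‖subc 0 1 N k - z‖ := norm_add_le _ _
      _ ≤ _ := by linarith
  have hl8 : 2^(n+2)*(1/(N:ℝ)) ≤ 1/8 := by
    rw [hNr, pow_add 2 b 5, mul_one_div, div_le_iff₀ (by positivity), ← hb]
    have : (0:ℝ) < 2^b := by positivity
    linarith
  -- the exponent
  obtain ⟨j, hj1, hj2⟩ : ∃ j : ℕ, (j = 0 ∨ ε^2 ≤ c1^j * c3) ∧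
      q^j ≤ q⁻¹ * (c3^(-(s/2)) * ε^s) := by
    have key : ∀ j : ℕ, c1^(j+1) < ε^2/c3 → q^j ≤ q⁻¹ * (c3^(-(s/2)) * ε^s) := by
      intro j hj
      have h1 : (c1^(j+1))^(s/2) ≤ (ε^2/c3)^(s/2) := by gcongr
      rw [← hqs, Real.div_rpow (by positivity) hc3p.le] at h1
      have h2 : (ε^2)^(s/2) = ε^s := by
        rw [← Real.rpow_natCast, ← Real.rpow_mul hε.le]; congr 1; push_cast; ring
      rw [h2] at h1
      rw [Real.rpow_neg hc3p.le]
      rw [pow_succ] at h1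
      rw [inv_mul_eq_div, le_div_iff₀ hq0]
      calc _ ≤ _ := h1
        _ = _ := by ring
    by_cases h : ε^2/c3 ≤ 1
    · obtain ⟨j, h1, h2⟩ := exists_nat_pow_near_of_lt_one (x := ε^2/c3) (by positivity) h hc10 hc11
      refine ⟨j, Or.inr ?_, key j h1⟩
      rwa [div_le_iff₀ hc3p] at h2
    · push Not at h
      refine ⟨0, Or.inl rfl, key 0 ?_⟩
      rw [zero_add, pow_one]; linarith
  have hb : ∀ k ∈ (Finset.univ : Finset (Fin n → Fin N)),
      volume {z ∈ {z ∈ cube (subc (0 : Eu n) 1 N k) (1/N) | |f z| < ε} | k ∈ P}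
        ≤ ENNReal.ofReal (q^j * (2*(1/N))^n) := by
    intro k _
    by_cases hk : k ∈ P
    · refine (measure_mono (fun z hz => hz.1)).trans ?_
      rcases hj1 with h0 | h0
      · subst h0
        rw [pow_zero, one_mul, ← vol_cube (subc 0 1 N k) (by positivity)]
        exact measure_mono (fun z hz => hz.1)
      · refine H f c hf ε hε j _ _ (by positivity) hl8 hk (h0.trans ?_)
        have : 0 ≤ (n:ℝ)*(1/N) := by positivity
        have hk' : ‖subc (0 : Eu n) 1 N k‖ ≤ 3/4 - n*(1/N) := hk
        gcongr
        exact hFlow _ (by linarith)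
    · have : {z ∈ {z ∈ cube (subc (0 : Eu n) 1 N k) (1/N) | |f z| < ε} | k ∈ P} = ∅ := by
        ext z; simp [hk]
      rw [this, measure_empty]; exact zero_le
  refine (measure_mono hsub).trans ((measure_biUnion_finset_le _ _).trans ?_)
  refine (Finset.sum_le_sum hb).trans ?_
  rw [Finset.sum_const, Finset.card_univ,
    Fintype.card_fun, Fintype.card_fin, Fintype.card_fin, nsmul_eq_mul,
    ← ENNReal.ofReal_natCast, ← ENNReal.ofReal_mul (by positivity)]
  apply ENNReal.ofReal_le_ofReal
  have e : ((N^n : ℕ):ℝ) * (q^j * (2*(1/N))^n) = 2^n * q^j := by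
    push_cast
    rw [mul_one_div, div_pow]; field_simp
  rw [e]
  calc _ ≤ 2^n * (q⁻¹ * (c3^(-(s/2)) * ε^s)) := by gcongr
    _ = _ := by ring

end partj

section partk
variable {n : ℕ}

theorem lapl_comp {ψ ψ' ψ'' : ℝ → ℝ} (h1 : ∀ t, HasDerivAt ψ (ψ' t) t)
    (h2 : ∀ t, HasDerivAt ψ' (ψ'' t) t) {f : Eu n → ℝ} (hf : ContDiff ℝ 2 f) (x : Eu n) :
    lapl (fun y => ψ (f y)) x = ψ'' (f x) * ∑ i, (pd i f x)^2 + ψ' (f x) * lapl f x := by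
  have hd : Differentiable ℝ f := hf.differentiable two_ne_zero
  have e1 : ∀ i, (pd i fun y => ψ (f y)) = fun y => ψ' (f y) * pd i f y := by
    intro i
    funext y
    have h := (h1 (f y)).comp_hasFDerivAt y (hd y).hasFDerivAt
    have h' : fderiv ℝ (fun y => ψ (f y)) y = ψ' (f y) • fderiv ℝ f y := h.fderiv
    simp only [pd, h']
    rfl
  rw [lapl_eq, lapl_eq, Finset.mul_sum, Finset.mul_sum, ← Finset.sum_add_distrib]
  refine Finset.sum_congr rfl fun i _ => ?_
  rw [e1 i]
  have hp : Differentiable ℝ (pd i f) := (contDiff_pd hf i).differentiable one_ne_zero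
  have h := (h2 (f x)).comp_hasFDerivAt x (hd x).hasFDerivAt
  have h3 := HasFDerivAt.fun_mul h (hp x).hasFDerivAt
  have h' := h3.fderiv
  simp only [Function.comp_def] at h'
  rw [pd, h']
  simp [pd]
  ring

theorem lapl_cube_nonneg {f : Eu n → ℝ} (hf : ContDiff ℝ 2 f) {x : Eu n} (hl : lapl f x = 0) :
    0 ≤ lapl (fun y => max (f y) 0^3) x := by
  rw [lapl_comp (ψ := fun t => max t 0^3) (ψ' := fun t => 3 * max t 0^2)
    (ψ'' := fun t => 3 * (2 * max t 0)) _ _ hf, hl, mul_zero, add_zero]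
  · exact mul_nonneg (by positivity) (Finset.sum_nonneg fun i _ => sq_nonneg _)
  · intro t
    simpa using hasDerivAt_maxpow 1 t
  · intro t
    simpa using (hasDerivAt_maxpow 0 t).const_mul 3

theorem lapl_sq_nonneg {f : Eu n → ℝ} (hf : ContDiff ℝ 2 f) {x : Eu n} (hl : lapl f x = 0) :
    0 ≤ lapl (fun y => f y^2) x := by
  rw [lapl_comp (ψ := fun t => t^2) (ψ' := fun t => 2 * t)
    (ψ'' := fun t => 2) _ _ hf, hl, mul_zero, add_zero]
  · exact mul_nonneg (by positivity) (Finset.sum_nonneg fun i _ => sq_nonneg _)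
  · intro t
    simpa using hasDerivAt_pow 2 t
  · intro t
    simpa using (hasDerivAt_id t).const_mul 2

/-- harmonic combination -/
theorem lapl_comb {u v : Eu n → ℝ} (hu : ContDiff ℝ 2 u) (hv : ContDiff ℝ 2 v) (M δ : ℝ)
    {x : Eu n} (h1 : lapl u x = 0) (h2 : lapl v x = 0) :
    lapl (fun y => v y - M * u y - δ) x = 0 := by
  have hud : Differentiable ℝ u := hu.differentiable two_ne_zero
  have hvd : Differentiable ℝ v := hv.differentiable two_ne_zero
  have e : ∀ i, pd i (fun y => v y - M * u y - δ) = fun y => pd i v y - M * pd i u y := by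
    intro i; funext y
    have h := (((hvd y).hasFDerivAt.fun_sub ((hud y).hasFDerivAt.const_mul M)).sub_const δ).fderiv
    rw [pd, h]; simp [pd]
  have e2 : ∀ i, pd i (pd i (fun y => v y - M * u y - δ)) x
      = pd i (pd i v) x - M * pd i (pd i u) x := by
    intro i
    rw [e i]
    have a := ((contDiff_pd hu i).differentiable one_ne_zero x).hasFDerivAt
    have b := ((contDiff_pd hv i).differentiable one_ne_zero x).hasFDerivAt
    have h := (b.fun_sub (a.const_mul M)).fderiv
    rw [pd, h]; simp [pd]
  rw [lapl_eq] at *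
  rw [Finset.sum_congr rfl (fun i _ => e2 i), Finset.sum_sub_distrib, ← Finset.mul_sum, h1, h2]
  simp

/-- pair of harmonic functions with nested zero sets -/
structure Pair (u v : Eu n → ℝ) : Prop where
  su : ContDiff ℝ 2 u
  sv : ContDiff ℝ 2 v
  hu : ∀ y ∈ ball (0 : Eu n) (63/64), lapl u y = 0
  hv : ∀ y ∈ ball (0 : Eu n) (63/64), lapl v y = 0
  hz : ∀ y ∈ ball (0 : Eu n) (63/64), u y = 0 → v y = 0

theorem Pair.local_form {u v : Eu n → ℝ} (h : Pair u v) (M : ℝ) {δ : ℝ} (hδ : 0 < δ)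
    {z : Eu n} (hz : z ∈ ball (0 : Eu n) (63/64)) :
    ((fun y => if 0 < u y then max (v y - M*u y - δ) 0^3 else 0) =ᶠ[nhds z]
      (fun y => max (v y - M*u y - δ) 0^3)) ∨
    ((fun y => if 0 < u y then max (v y - M*u y - δ) 0^3 else 0) =ᶠ[nhds z] (fun _ => (0:ℝ))) := by
  have cu := h.su.continuous
  have cv := h.sv.continuous
  rcases lt_trichotomy (u z) 0 with h0 | h0 | h0
  · right
    filter_upwards [cu.continuousAt.eventually_lt_const h0] with y hy
    rw [if_neg (by linarith)]
  · right
    have hc : Continuous (fun y => v y - M*u y) := by fun_prop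
    have h1 : v z - M*u z < δ := by rw [h.hz z hz h0, h0]; simpa using hδ
    filter_upwards [hc.continuousAt.eventually_lt_const h1] with y hy
    rw [max_eq_right (by linarith)]; simp
  · left
    filter_upwards [cu.continuousAt.eventually_const_lt h0] with y hy
    rw [if_pos hy]

theorem Pair.dg_aux {u v : Eu n → ℝ} (h : Pair u v) (M : ℝ) {δ : ℝ} (hδ : 0 < δ)
    {x : Eu n} {d A m : ℝ} (hd : 0 < d) (hxd : ‖x‖ + d < 63/64) (hA : 0 ≤ A) (hm : 0 ≤ m)
    (hle : ∀ z ∈ ball x d, 0 < u z → v z - M*u z ≤ A)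
    {E : Set (Eu n)} (hE : volume E ≤ ENNReal.ofReal m)
    (hzE : ∀ z ∈ ball x d, 0 < u z → 0 < v z - M*u z → z ∈ E) (hux : 0 < u x) :
    max (v x - M*u x - δ) 0^3 * cR n ≤ 6*A^3*m/d^n := by
  set φ : Eu n → ℝ := fun y => if 0 < u y then max (v y - M*u y - δ) 0^3 else 0 with hφ
  obtain ⟨d', hd1, hd2⟩ := exists_between (show d < 63/64 - ‖x‖ by linarith)
  have hball : ball x d' ⊆ ball (0 : Eu n) (63/64) := by
    apply ball_subset_ball'; rw [dist_zero_right]; linarith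
  have hsm : ContDiff ℝ 2 (fun y => v y - M*u y - δ) :=
    (h.sv.sub (contDiff_const.mul h.su)).sub contDiff_const
  have hsm3 : ContDiff ℝ 2 (fun y => max (v y - M*u y - δ) 0^3) := contDiff_maxpow3.comp hsm
  have hC : ContDiffOn ℝ 2 φ (ball x d') := by
    intro z hz
    apply ContDiffAt.contDiffWithinAt
    rcases h.local_form M hδ (hball hz) with e | e
    · exact hsm3.contDiffAt.congr_of_eventuallyEq e
    · exact contDiffAt_const.congr_of_eventuallyEq e
  have hL : ∀ z ∈ ball x d', 0 ≤ lapl φ z := by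
    intro z hz
    rcases h.local_form M hδ (hball hz) with e | e
    · rw [lapl_congr e]
      exact lapl_cube_nonneg hsm (lapl_comb h.su h.sv M δ (h.hu z (hball hz)) (h.hv z (hball hz)))
    · rw [lapl_congr e]
      simp [lapl]
  have hmean := mean_le hC hd hd1 hL
  have hφx : φ x = max (v x - M*u x - δ) 0^3 := by simp only [hφ]; rw [if_pos hux]
  rw [hφx] at hmean
  refine hmean.trans ?_
  set E' : Set (Eu n) := (fun y => d • y) ⁻¹' ((fun y => x + y) ⁻¹' E) with hE'
  have hvE : volume E' ≤ ENNReal.ofReal (m/d^n) := by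
    rw [hE', Measure.addHaar_preimage_smul volume hd.ne', measure_preimage_add,
      finrank_euclideanSpace, Fintype.card_fin, abs_of_pos (by positivity)]
    calc _ ≤ ENNReal.ofReal (d^n)⁻¹ * ENNReal.ofReal m := by gcongr
      _ = _ := by rw [← ENNReal.ofReal_mul (by positivity)]; congr 1; ring
  have key : ∀ y, φ (x + d•y) * kR y ≠ 0 → y ∈ E' ∧ φ (x+d•y) ≤ A^3 := by
    intro y hy
    have hy1 : ‖y‖ < 1 := by
      by_contra hc; push Not at hc
      exact hy (by rw [kR_zero hc, mul_zero])
    have hyb : x + d•y ∈ ball x d := by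
      rw [mem_ball, dist_eq_norm, add_sub_cancel_left, norm_smul, Real.norm_of_nonneg hd.le]
      nlinarith
    have hne : φ (x+d•y) ≠ 0 := left_ne_zero_of_mul hy
    have hu0 : 0 < u (x+d•y) := by
      by_contra hc; exact hne (by simp only [hφ]; rw [if_neg hc])
    have hφe : φ (x+d•y) = max (v (x+d•y) - M*u (x+d•y) - δ) 0^3 := by
      simp only [hφ]; rw [if_pos hu0]
    have hpos : 0 < v (x+d•y) - M*u (x+d•y) - δ := by
      by_contra hc; push Not at hc
      exact hne (by rw [hφe, max_eq_right hc]; simp)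
    refine ⟨hzE _ hyb hu0 (by linarith), ?_⟩
    rw [hφe, max_eq_left hpos.le]
    have := hle _ hyb hu0
    gcongr
    linarith
  rw [← setIntegral_eq_integral_of_forall_compl_eq_zero (s := E')
    (fun y hy => by by_contra hc; exact hy (key y hc).1)]
  have hbd : ∀ y ∈ E', ‖φ (x + d•y) * kR y‖ ≤ 6*A^3 := by
    intro y _
    by_cases hc : φ (x + d•y) * kR y = 0
    · rw [hc, norm_zero]; positivity
    · have h0 : 0 ≤ φ (x+d•y) := by simp only [hφ]; split_ifs <;> positivity
      rw [Real.norm_of_nonneg (mul_nonneg h0 (kR_nonneg y))]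
      calc _ ≤ A^3*6 := mul_le_mul (key y hc).2 (kR_le y) (kR_nonneg y) (by positivity)
        _ = _ := by ring
  have hfin : volume E' < ⊤ := hvE.trans_lt ENNReal.ofReal_lt_top
  have := norm_setIntegral_le_of_norm_le_const hfin hbd
  refine (le_abs_self _).trans (this.trans ?_)
  have hr : volume.real E' ≤ m/d^n := ENNReal.toReal_le_of_le_ofReal (by positivity) hvE
  calc _ ≤ 6*A^3*(m/d^n) := by gcongr
    _ = _ := by ring

theorem Pair.dg {u v : Eu n → ℝ} (h : Pair u v) (M : ℝ)
    {x : Eu n} {d A m : ℝ} (hd : 0 < d) (hxd : ‖x‖ + d < 63/64) (hA : 0 ≤ A) (hm : 0 ≤ m)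
    (hle : ∀ z ∈ ball x d, 0 < u z → v z - M*u z ≤ A)
    {E : Set (Eu n)} (hE : volume E ≤ ENNReal.ofReal m)
    (hzE : ∀ z ∈ ball x d, 0 < u z → 0 < v z - M*u z → z ∈ E) (hux : 0 < u x) :
    max (v x - M*u x) 0^3 * cR n ≤ 6*A^3*m/d^n := by
  have hc : Continuous (fun δ : ℝ => max (v x - M*u x - δ) 0^3 * cR n) := by fun_prop
  have ht : Tendsto (fun δ : ℝ => max (v x - M*u x - δ) 0^3 * cR n) (nhdsWithin 0 (Set.Ioi 0))
      (nhds (max (v x - M*u x - 0) 0^3 * cR n)) := (hc.tendsto 0).mono_left nhdsWithin_le_nhds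
  rw [sub_zero] at ht
  refine le_of_tendsto ht ?_
  filter_upwards [self_mem_nhdsWithin] with δ hδ
  exact h.dg_aux M hδ hd hxd hA hm hle hE hzE hux

end partk

section partl
variable {n : ℕ}

theorem Pair.iterate {u v : Eu n → ℝ} (h : Pair u v) {Cm s : ℝ} (hCm : 0 < Cm) (hs : 0 < s)
    (hmeas : ∀ (ε : ℝ), 0 < ε →
        volume {z ∈ ball (0 : Eu n) (21/32) | |u z| < ε} ≤ ENNReal.ofReal (Cm * ε^s))
    {r A M lam : ℝ} (hr : 0 < r) (hr1 : r < 7/8) (hA : 0 < A) (hM : 0 < M) (hlam : 0 < lam)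
    (hlam1 : lam < 1) (hlams : 2^n * (2*lam)^s ≤ 1)
    (hMs : 6*Cm*8^n*(2*A/M)^s ≤ cR n * lam^3 * r^n)
    (hvA : ∀ x : Eu n, ‖x‖ < 3*r/4 → v x ≤ A) :
    ∀ x : Eu n, ‖x‖ < r/2 → 0 < u x → v x ≤ M * u x := by
  have hcR := cR_pos (n := n)
  have main : ∀ k : ℕ, ∀ x : Eu n, ‖x‖ < r/2 + (r/4)*(1/2)^k → 0 < u x →
      v x - M*(1-(1/2)^k) * u x ≤ A * lam^k := by
    intro k
    induction k with
    | zero =>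
      intro x hx _
      have := hvA x (by simpa using (by linarith : ‖x‖ < 3*r/4))
      simpa using this
    | succ k ih =>
      intro x hx hux
      set d : ℝ := (r/4)*(1/2)^(k+1) with hd
      have hdp : 0 < d := by positivity
      have hhalf : ((1:ℝ)/2)^k = 2*(1/2)^(k+1) := by rw [pow_succ]; ring
      have hsmall : ((1:ℝ)/2)^(k+1) ≤ 1/2 := by
        rw [pow_succ]
        have : ((1:ℝ)/2)^k ≤ 1 := pow_le_one₀ (by norm_num) (by norm_num)
        linarith
      have hdr : d ≤ r/8 := by rw [hd]; nlinarith
      set t : ℝ := (1/2)^(k+1) with ht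
      have htp : 0 < t := by positivity
      set ε : ℝ := A*lam^k/(M*t) with hε
      have hεp : 0 < ε := by positivity
      have hin : ∀ z ∈ ball x d, ‖z‖ < r/2 + (r/4)*(1/2)^k := by
        intro z hz
        rw [mem_ball, dist_eq_norm] at hz
        calc ‖z‖ = ‖x + (z - x)‖ := by congr 1; abel
          _ ≤ ‖x‖ + ‖z - x‖ := norm_add_le _ _
          _ < _ := by rw [hhalf]; linarith
      have hk2 : ((1:ℝ)/2)^k ≤ 1 := pow_le_one₀ (by norm_num) (by norm_num)
      have hstep := h.dg (M*(1-t)) (x := x) (d := d) (A := A*lam^k) (m := Cm*ε^s)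
        (E := {z ∈ ball (0 : Eu n) (21/32) | |u z| < ε}) hdp (by linarith) (by positivity)
        (by positivity) ?_ (hmeas ε hεp) ?_ hux
      · -- conclusion
        have hεs : ε^s = (2*A/M)^s * ((2*lam)^s)^k := by
          have e : ε = (2*A/M) * (2*lam)^k := by
            have e2 : t = (2^(k+1))⁻¹ := by rw [ht, one_div, inv_pow]
            rw [hε, e2, mul_pow, pow_succ]; field_simp
          rw [e, Real.mul_rpow (by positivity) (by positivity), ← Real.rpow_natCast,
            ← Real.rpow_natCast, ← Real.rpow_mul (by positivity), ← Real.rpow_mul (by positivity),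
            mul_comm (k:ℝ) s]
        have hdn : d^n = r^n / (8^n * (2^n)^k) := by
          have e : d = r/(8*2^k) := by
            have e2 : t = (2^(k+1))⁻¹ := by rw [ht, one_div, inv_pow]
            rw [hd, e2, pow_succ]; field_simp; norm_num
          rw [e, div_pow, mul_pow, ← pow_mul, ← pow_mul, mul_comm k n]
        have hfin : 6*(A*lam^k)^3*(Cm*ε^s)/d^n ≤ (A*lam^(k+1))^3 * cR n := by
          rw [hεs, hdn]
          have hP : (2^n*(2*lam)^s)^k ≤ 1 := pow_le_one₀ (by positivity) hlams
          calc 6*(A*lam^k)^3*(Cm*((2*A/M)^s * ((2*lam)^s)^k))/(r^n / (8^n * (2^n)^k))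
              = (A*lam^k)^3 / r^n * ((6*Cm*8^n*(2*A/M)^s) * (2^n*(2*lam)^s)^k) := by
                rw [mul_pow (2^n)]; field_simp
            _ ≤ (A*lam^k)^3 / r^n * ((cR n * lam^3 * r^n) * 1) := by gcongr
            _ = _ := by rw [pow_succ lam k]; field_simp
        have h3 := le_of_mul_le_mul_right (hstep.trans hfin) hcR
        have h4 := le_of_pow_le_pow_left₀ (by norm_num) (by positivity) h3
        exact (le_max_left _ _).trans h4
      · intro z hz huz
        have := ih z (hin z hz) huz
        rw [hhalf] at this
        have : 0 < M*t*u z := by positivity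
        linarith
      · intro z hz huz hpos
        have h1 := ih z (hin z hz) huz
        rw [hhalf] at h1
        have h2 := hin z hz
        refine ⟨?_, ?_⟩
        · rw [mem_ball_zero_iff]; nlinarith
        · rw [abs_of_pos huz, hε, lt_div_iff₀ (by positivity)]
          linarith
  intro x hx hux
  have h1 : Tendsto (fun k : ℕ => v x - M*(1-(1/2)^k) * u x) atTop
      (nhds (v x - M*(1-0) * u x)) := by
    have := tendsto_pow_atTop_nhds_zero_of_lt_one (r := (1/2:ℝ)) (by norm_num) (by norm_num)
    exact tendsto_const_nhds.sub (((tendsto_const_nhds.sub this).const_mul M).mul_const _)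
  have h2 : Tendsto (fun k : ℕ => A*lam^k) atTop (nhds (A*0)) :=
    (tendsto_pow_atTop_nhds_zero_of_lt_one hlam.le hlam1).const_mul A
  have h3 := le_of_tendsto_of_tendsto' h1 h2 (fun k => main k x (by
    have : 0 < (r/4)*(1/2)^k := by positivity
    linarith) hux)
  linarith

theorem Pair.neg_left {u v : Eu n → ℝ} (h : Pair u v) : Pair (fun x => - u x) v where
  su := h.su.neg
  sv := h.sv
  hu := fun y hy => by rw [lapl_neg, h.hu y hy, neg_zero]
  hv := h.hv
  hz := fun y hy h0 => h.hz y hy (by simpa using h0)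

theorem Pair.neg_right {u v : Eu n → ℝ} (h : Pair u v) : Pair u (fun x => - v x) where
  su := h.su
  sv := h.sv.neg
  hu := h.hu
  hv := fun y hy => by rw [lapl_neg, h.hv y hy, neg_zero]
  hz := fun y hy h0 => by simp [h.hz y hy h0]

theorem Pair.iterate_abs {u v : Eu n → ℝ} (h : Pair u v) {Cm s : ℝ} (hCm : 0 < Cm) (hs : 0 < s)
    (hmeas : ∀ (ε : ℝ), 0 < ε →
        volume {z ∈ ball (0 : Eu n) (21/32) | |u z| < ε} ≤ ENNReal.ofReal (Cm * ε^s))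
    {r A M lam : ℝ} (hr : 0 < r) (hr1 : r < 7/8) (hA : 0 < A) (hM : 0 < M) (hlam : 0 < lam)
    (hlam1 : lam < 1) (hlams : 2^n * (2*lam)^s ≤ 1)
    (hMs : 6*Cm*8^n*(2*A/M)^s ≤ cR n * lam^3 * r^n)
    (hvA : ∀ x : Eu n, ‖x‖ < 3*r/4 → |v x| ≤ A) :
    ∀ x : Eu n, ‖x‖ < r/2 → |v x| ≤ M * |u x| := by
  intro x hx
  have hmeas' : ∀ (ε : ℝ), 0 < ε →
        volume {z ∈ ball (0 : Eu n) (21/32) | |- u z| < ε} ≤ ENNReal.ofReal (Cm * ε^s) := by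
    simpa only [abs_neg] using hmeas
  have a1 := fun x hx => (le_abs_self _).trans (hvA x hx)
  have a2 := fun x hx => (neg_le_abs _).trans (hvA x hx)
  rcases lt_trichotomy (u x) 0 with h0 | h0 | h0
  · rw [abs_of_neg h0]
    have h0' : 0 < - u x := by linarith
    exact abs_le'.2 ⟨h.neg_left.iterate hCm hs hmeas' hr hr1 hA hM hlam hlam1 hlams hMs a1 x hx h0',
      h.neg_left.neg_right.iterate hCm hs hmeas' hr hr1 hA hM hlam hlam1 hlams hMs a2 x hx h0'⟩
  · rw [h.hz x (by rw [mem_ball_zero_iff]; linarith) h0, h0]; simp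
  · rw [abs_of_pos h0]
    exact abs_le'.2 ⟨h.iterate hCm hs hmeas hr hr1 hA hM hlam hlam1 hlams hMs a1 x hx h0,
      h.neg_right.iterate hCm hs hmeas hr hr1 hA hM hlam hlam1 hlams hMs a2 x hx h0⟩

theorem Pair.sup_bound {u v : Eu n → ℝ} (h : Pair u v) {r : ℝ} (hr : 0 < r) (hr1 : r < 7/8)
    {x : Eu n} (hx : ‖x‖ < 3*r/4) :
    v x^2 ≤ 6*4^n/cR n * ((r^n)⁻¹ * ∫ z in ball (0 : Eu n) r, v z^2) := by
  have hcR := cR_pos (n := n)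
  have hsub : ball x (r/4) ⊆ ball (0 : Eu n) r := by
    apply ball_subset_ball'; rw [dist_zero_right]; linarith
  have h1 := mean_le_global (f := fun y => v y^2) (h.sv.pow 2) x (R := r/4) (by linarith)
    (fun y hy => lapl_sq_nonneg h.sv (h.hv y (by
      have := hsub hy
      rw [mem_ball_zero_iff] at *; linarith)))
  have h2 := FF_le_ball h.sv.continuous x (t := r/4) (by positivity)
  have h3 := setInt_mono h.sv.continuous hsub
  have h4 : v x^2 * cR n ≤ 6*((r/4)^n)⁻¹ * ∫ z in ball (0 : Eu n) r, v z^2 :=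
    h1.trans (h2.trans (by gcongr))
  rw [div_mul_eq_mul_div, le_div_iff₀ hcR]
  refine h4.trans (le_of_eq ?_)
  rw [div_pow]; field_simp

theorem dg_final (n : ℕ) {Cm s : ℝ} (hCm : 0 < Cm) (hs : 0 < s) :
    ∃ C : ℝ, 0 < C ∧ ∀ u v : Eu n → ℝ, Pair u v →
    (∀ (ε : ℝ), 0 < ε →
        volume {z ∈ ball (0 : Eu n) (21/32) | |u z| < ε} ≤ ENNReal.ofReal (Cm * ε^s)) →
    ∀ r : ℝ, 0 < r → r < 7/8 → ∀ x : Eu n, ‖x‖ < r/2 →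
      |v x| ≤ C * Real.sqrt (r^(-((n:ℝ) + 2*n/s)) * ∫ z in ball (0 : Eu n) r, v z^2) * |u x| := by
  have hcR := cR_pos (n := n)
  set lam : ℝ := 2^(-1-(n:ℝ)/s) with hlam
  have hlam0 : 0 < lam := by positivity
  have hlam1 : lam < 1 := by
    apply Real.rpow_lt_one_of_one_lt_of_neg (by norm_num)
    have : 0 ≤ (n:ℝ)/s := by positivity
    linarith
  have hlams : 2^n*(2*lam)^s ≤ 1 := by
    have e : 2*lam = 2^(-((n:ℝ)/s)) := by
      rw [hlam, show -1-(n:ℝ)/s = -1 + -((n:ℝ)/s) by ring, Real.rpow_add (by norm_num),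
        Real.rpow_neg_one]; ring
    rw [e, ← Real.rpow_mul (by norm_num), show -((n:ℝ)/s)*s = -(n:ℝ) by field_simp,
      Real.rpow_neg (by norm_num), Real.rpow_natCast]
    exact le_of_eq (mul_inv_cancel₀ (by positivity))
  set κ : ℝ := cR n*lam^3/(6*Cm*8^n) with hκ
  have hκp : 0 < κ := by positivity
  refine ⟨2*κ^(-(1/s))*Real.sqrt (6*4^n/cR n), by positivity, ?_⟩
  intro u v h hmeas r hr hr1 x hx
  set I := ∫ z in ball (0 : Eu n) r, v z^2 with hI
  have hI0 : 0 ≤ I := integral_nonneg (fun z => sq_nonneg _)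
  set A := Real.sqrt (6*4^n/cR n) * Real.sqrt ((r^n)⁻¹*I) with hA
  have hsup : ∀ x : Eu n, ‖x‖ < 3*r/4 → |v x| ≤ A := by
    intro x hx
    rw [hA, ← Real.sqrt_mul (by positivity)]
    exact Real.abs_le_sqrt (h.sup_bound hr hr1 hx)
  rcases eq_or_lt_of_le (show 0 ≤ A by positivity) with h0 | h0
  · have := hsup x (by linarith)
    rw [← h0] at this
    exact this.trans (by positivity)
  set M := 2*A*(κ*r^n)^(-(1/s)) with hM
  have hM0 : 0 < M := by positivity
  have hMs : 6*Cm*8^n*(2*A/M)^s ≤ cR n * lam^3 * r^n := by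
    have e : 2*A/M = (κ*r^n)^(1/s) := by
      rw [hM, Real.rpow_neg (by positivity)]; field_simp
    rw [e, ← Real.rpow_mul (by positivity), one_div_mul_cancel hs.ne', Real.rpow_one, hκ]
    apply le_of_eq; field_simp
  have hmain := h.iterate_abs hCm hs hmeas hr hr1 h0 hM0 hlam0 hlam1 hlams hMs hsup x hx
  refine hmain.trans (le_of_eq ?_)
  congr 1
  rw [hM, hA]
  have e1 : r^(-((n:ℝ)+2*n/s)) * I = (r^(-((n:ℝ)/s)))^2 * ((r^n)⁻¹*I) := by
    rw [← Real.rpow_natCast, ← Real.rpow_mul hr.le, ← Real.rpow_natCast r n,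
      ← Real.rpow_neg hr.le, ← mul_assoc, ← Real.rpow_add hr]
    congr 2; push_cast; ring
  rw [e1, Real.sqrt_mul (sq_nonneg (r^(-((n:ℝ)/s)))), Real.sqrt_sq (by positivity),
    Real.mul_rpow hκp.le (by positivity), ← Real.rpow_natCast r n, ← Real.rpow_mul hr.le,
    show (n:ℝ) * -(1/s) = -((n:ℝ)/s) by ring]
  ring

end partl

theorem freqN_congr {n : ℕ} {f u : Eu n → ℝ} {R ρ : ℝ}
    (h : ∀ y ∈ ball (0 : Eu n) R, f y = u y) (hρ : ρ < R) :
    freqN f 0 ρ = freqN u 0 ρ := by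
  have e1 : DInt f 0 ρ = DInt u 0 ρ := by
    unfold DInt
    refine setIntegral_congr_fun measurableSet_ball (fun y hy => ?_)
    have hy' : y ∈ ball (0 : Eu n) R := ball_subset_ball hρ.le hy
    have he : f =ᶠ[nhds y] u := by
      filter_upwards [isOpen_ball.mem_nhds hy'] with z hz using h z hz
    simp only [gradient, he.fderiv_eq]
  have e2 : HInt f 0 ρ = HInt u 0 ρ := by
    unfold HInt
    refine setIntegral_congr_fun isClosed_sphere.measurableSet (fun y hy => ?_)
    have hy' : y ∈ ball (0 : Eu n) R := by
      rw [mem_sphere] at hy; rw [mem_ball, hy]; exact hρ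
    simp only [h y hy']
  unfold freqN
  rw [e1, e2]

/-- **Remark 3.11** (uniform L^∞ boundary Harnack for the ratio, case A = Identity):
for `n ≥ 2` and `N₀ > 0` there are `C > 0` and `α > 0` such that for all harmonic `u, v`
on `B₁` with `u(0) = 0`, frequency of `u` bounded by `N₀`, `‖u‖_{L²(B_{1/2})} = 1` and
`Z(u) ⊆ Z(v)`, and every `r ∈ (0, 7/8)`,
`sup_{B_{r/2} ∖ Z(u)} |v/u| ≤ C (r^{-α} ∫_{B_r} v²)^{1/2}`. -/
theorem uniform_boundary_harnack (n : ℕ) (hn : 2 ≤ n) (N₀ : ℝ) (hN₀ : 0 < N₀) :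
    ∃ C α : ℝ, 0 < C ∧ 0 < α ∧
      ∀ u v : EuclideanSpace ℝ (Fin n) → ℝ,
        HarmonicFnOn u (ball (0 : EuclideanSpace ℝ (Fin n)) 1) →
        HarmonicFnOn v (ball (0 : EuclideanSpace ℝ (Fin n)) 1) →
        u 0 = 0 →
        (∀ r ∈ Set.Ioo (0 : ℝ) 1, freqN u 0 r ≤ N₀) →
        (∫ x in ball (0 : EuclideanSpace ℝ (Fin n)) (1/2), (u x) ^ 2) = 1 →
        (∀ x ∈ ball (0 : EuclideanSpace ℝ (Fin n)) 1, u x = 0 → v x = 0) →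
        ∀ r : ℝ, 0 < r → r < 7/8 →
          ∀ x ∈ ball (0 : EuclideanSpace ℝ (Fin n)) (r/2), u x ≠ 0 →
            |v x / u x| ≤
              C * Real.sqrt (r ^ (-α) *
                ∫ y in ball (0 : EuclideanSpace ℝ (Fin n)) r, (v y) ^ 2) := by
  obtain ⟨m, rfl⟩ : ∃ m, n = m+1 := ⟨n-1, by omega⟩
  obtain ⟨D, c, hD, hc, hnd⟩ := nondeg_exists m N₀ hN₀
  obtain ⟨Cm, s, hCm, hs, hmeas⟩ := bad_measure (m+1) (by omega) D c hD hc
  obtain ⟨C, hC, hfin⟩ := dg_final (m+1) hCm hs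
  refine ⟨C, ((m+1 : ℕ) : ℝ) + 2*((m+1 : ℕ) : ℝ)/s, hC, by positivity, ?_⟩
  intro u v hu hv _ hfreq hint hz r hr hr1 x hx hux
  obtain ⟨f, hf, hfu⟩ := exists_ext hu.1 (R := 63/64) (by norm_num) (by norm_num)
  obtain ⟨g, hg, hgv⟩ := exists_ext hv.1 (R := 63/64) (by norm_num) (by norm_num)
  have hsub : ball (0 : Eu (m+1)) (63/64) ⊆ ball 0 1 := ball_subset_ball (by norm_num)
  have hlf : ∀ y ∈ ball (0 : Eu (m+1)) (63/64), lapl f y = 0 := fun y hy => by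
    rw [lapl_congr (g := u) (by filter_upwards [isOpen_ball.mem_nhds hy] with z hz using hfu z hz)]
    exact hu.2 y (hsub hy)
  have hlg : ∀ y ∈ ball (0 : Eu (m+1)) (63/64), lapl g y = 0 := fun y hy => by
    rw [lapl_congr (g := v) (by filter_upwards [isOpen_ball.mem_nhds hy] with z hz using hgv z hz)]
    exact hv.2 y (hsub hy)
  have hP : Pair f g := ⟨hf, hg, hlf, hlg, fun y hy h0 => by
    rw [hgv y hy]; exact hz y (hsub hy) (by rw [← hfu y hy]; exact h0)⟩
  have hN : Nondeg f D c := by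
    refine hnd f hf hlf ?_ ?_
    · intro ρ hρ
      rw [freqN_congr hfu hρ.2]
      exact hfreq ρ ⟨hρ.1, by linarith [hρ.2]⟩
    · refine Eq.trans ?_ hint
      refine setIntegral_congr_fun measurableSet_ball (fun y hy => ?_)
      simp only [hfu y (ball_subset_ball (by norm_num) hy)]
  have hx' : ‖x‖ < r/2 := by rwa [mem_ball_zero_iff] at hx
  have h1 := hfin f g hP (hmeas f hN) r hr hr1 x hx'
  have hxb : x ∈ ball (0 : Eu (m+1)) (63/64) := by rw [mem_ball_zero_iff]; linarith
  have e : ∫ z in ball (0 : Eu (m+1)) r, g z^2 = ∫ z in ball (0 : Eu (m+1)) r, v z^2 := by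
    refine setIntegral_congr_fun measurableSet_ball (fun y hy => ?_)
    simp only [hgv y (ball_subset_ball (by linarith) hy)]
  rw [hfu x hxb, hgv x hxb, e] at h1
  rw [abs_div, div_le_iff₀ (abs_pos.2 hux)]
  exact h1
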